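/- For a fixed n ≥ 3, the number of equivalence classes of set partition words p with N(p) = n distinct letters and length |p| = 2n + 1 such that φ_{aba}^{n−1}(p) is not sorted equals C(n+1, 2) + 2·C(n, 2). -/

import Mathlib

/-- West's stack-sorting map, implemented with an explicit stack (top = head). -/
def sWestAux : List ℕ → List ℕ → List ℕ
  | [], st => st
  | x :: xs, [] => sWestAux xs [x]
  | x :: xs, t :: st =>
      if t < x then t :: sWestAux (x :: xs) st
      else sWestAux xs (x :: t :: st)
termination_by l st => 2 * l.length + st.length

def sWest (l : List ℕ) : List ℕ := sWestAux l []

/-- A word contains a subsequence equivalent to `aba`. -/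
def HasABA (l : List ℕ) : Prop :=
  ∃ i j k : Fin l.length, i < j ∧ j < k ∧ l.get i = l.get k ∧ l.get j ≠ l.get i

instance (l : List ℕ) : Decidable (HasABA l) := by
  unfold HasABA; infer_instance

/-- Xia's stack-sorting map φ_{aba}, with explicit stack (top = head). -/
def phiAux : List ℕ → List ℕ → List ℕ
  | [], st => st
  | x :: xs, [] => phiAux xs [x]
  | x :: xs, t :: st =>
      if HasABA (x :: t :: st) then t :: phiAux (x :: xs) st
      else phiAux xs (x :: t :: st)
termination_by l st => 2 * l.length + st.length

def phi (p : List ℕ) : List ℕ := phiAux p []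

/-- A set partition word is sorted: all occurrences of each letter are consecutive. -/
def SortedWord (p : List ℕ) : Prop :=
  ∀ i j k : Fin p.length, i < j → j < k → p.get i = p.get k → p.get j = p.get i

/-- Number of distinct letters. -/
def Nletters (p : List ℕ) : ℕ := p.toFinset.card

def Avoids231 (l : List ℕ) : Prop :=
  ¬ ∃ i j k : Fin l.length, i < j ∧ j < k ∧ l.get k < l.get i ∧ l.get i < l.get j


/-- Canonical form of a set partition word: each letter is at most the number of
distinct letters seen before it (restricted growth condition), so each equivalence
class of words contains exactly one canonical representative. -/
def CanonicalWord (p : List ℕ) : Prop :=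
  ∀ i : Fin p.length, p.get i ≤ (p.take i).toFinset.card


/-- Collapse runs of equal adjacent letters. -/
def collapse : List ℕ → List ℕ
  | [] => []
  | x :: l => if (collapse l).head? = some x then collapse l else x :: collapse l

/-- Variant of `phiAux` that never pushes a letter on top of itself. -/
def psi : List ℕ → List ℕ → List ℕ
  | [], st => st
  | x :: xs, [] => psi xs [x]
  | x :: xs, t :: st =>
      if t = x then psi xs (t :: st)
      else if x ∈ st then t :: psi (x :: xs) st
      else psi xs (x :: t :: st)
termination_by l st => 2 * l.length + st.length

theorem collapse_head (l : List ℕ) : (collapse l).head? = l.head? := by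
  induction l with
  | nil => rfl
  | cons x l ih =>
    unfold collapse
    split_ifs with h
    · simpa using h
    · simp

theorem collapse_cons_cons_same (x : ℕ) (l : List ℕ) :
    collapse (x :: x :: l) = collapse (x :: l) := by
  rw [collapse]
  rw [if_pos]
  rw [collapse_head]; rfl

theorem collapse_cons_cons_ne {x y : ℕ} (h : x ≠ y) (l : List ℕ) :
    collapse (x :: y :: l) = x :: collapse (y :: l) := by
  rw [collapse]
  rw [if_neg]
  rw [collapse_head]; simpa using Ne.symm h

theorem collapse_cons_exists (x : ℕ) (l : List ℕ) : ∃ r, collapse (x :: l) = x :: r := by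
  have := collapse_head (x :: l)
  cases h : collapse (x :: l) with
  | nil => rw [h] at this; simp at this
  | cons y r => rw [h] at this; simp at this; exact ⟨r, by rw [this]⟩

theorem mem_collapse {a : ℕ} {l : List ℕ} : a ∈ collapse l ↔ a ∈ l := by
  induction l with
  | nil => rfl
  | cons x l ih =>
    unfold collapse
    split_ifs with h
    · constructor
      · intro ha; exact List.mem_cons_of_mem _ (ih.1 ha)
      · intro ha
        rcases List.mem_cons.1 ha with rfl | ha
        · exact List.mem_of_mem_head? h
        · exact ih.2 ha
    · simp [ih]

theorem collapse_sublist (l : List ℕ) : (collapse l).Sublist l := by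
  induction l with
  | nil => simp [collapse]
  | cons x l ih =>
    unfold collapse
    split_ifs with h
    · exact ih.trans (List.sublist_cons_self _ _)
    · exact ih.cons_cons _

theorem collapse_idem (l : List ℕ) : collapse (collapse l) = collapse l := by
  induction l with
  | nil => rfl
  | cons x l ih =>
    by_cases h : (collapse l).head? = some x
    · rw [collapse, if_pos h, ih]
    · have : collapse (x :: l) = x :: collapse l := by rw [collapse, if_neg h]
      rw [this, collapse, ih, if_neg h]

theorem collapse_cons_congr (x : ℕ) {l m : List ℕ} (h : collapse l = collapse m) :
    collapse (x :: l) = collapse (x :: m) := by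
  simp only [collapse, h]

theorem hasABA_iff_sublist (l : List ℕ) :
    HasABA l ↔ ∃ a b, a ≠ b ∧ [a, b, a].Sublist l := by
  constructor
  · rintro ⟨i, j, k, hij, hjk, h1, h2⟩
    refine ⟨l.get i, l.get j, Ne.symm h2, ?_⟩
    have := List.sublist_iff_exists_fin_orderEmbedding_get_eq (l := [l.get i, l.get j, l.get i]) (l' := l)
    rw [this]
    refine ⟨OrderEmbedding.ofStrictMono ![i, j, k] ?_, ?_⟩
    · intro a b hab
      fin_cases a <;> fin_cases b <;> simp_all
      exact hij.trans hjk
    · intro a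
      fin_cases a
      exacts [rfl, rfl, h1]
  · rintro ⟨a, b, hab, h⟩
    rw [List.sublist_iff_exists_fin_orderEmbedding_get_eq] at h
    obtain ⟨f, hf⟩ := h
    have h0 := hf ⟨0, by simp⟩
    have h1 := hf ⟨1, by simp⟩
    have h2 := hf ⟨2, by simp⟩
    refine ⟨f ⟨0, by simp⟩, f ⟨1, by simp⟩, f ⟨2, by simp⟩, ?_, ?_, ?_, ?_⟩
    · apply f.strictMono; simp
    · apply f.strictMono; simp
    · rw [← h0, ← h2]; rfl
    · rw [← h0, ← h1]; exact Ne.symm hab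

theorem hasABA_iff (l : List ℕ) : HasABA l ↔ ¬ (collapse l).Nodup := by
  rw [hasABA_iff_sublist]
  induction l with
  | nil => simp [collapse]
  | cons x l ih =>
    cases l with
    | nil =>
      simp [collapse]
    | cons y l =>
      by_cases hxy : x = y
      · subst hxy
        rw [collapse_cons_cons_same, ← ih]
        constructor
        · rintro ⟨a, b, hab, h⟩
          refine ⟨a, b, hab, ?_⟩
          rcases List.sublist_cons_iff.1 h with h | ⟨r, hr, h⟩
          · exact h
          · simp at hr
            obtain ⟨rfl, rfl⟩ := hr
            rcases List.sublist_cons_iff.1 h with h | ⟨r, hr, h⟩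
            · exact h.cons_cons _
            · simp at hr
              exact absurd hr.1.symm hab
        · rintro ⟨a, b, hab, h⟩
          exact ⟨a, b, hab, h.cons _⟩
      · rw [collapse_cons_cons_ne hxy, List.nodup_cons, mem_collapse]
        constructor
        · rintro ⟨a, b, hab, h⟩
          rintro ⟨h1, h2⟩
          rcases List.sublist_cons_iff.1 h with h | ⟨r, hr, h⟩
          · exact ih.1 ⟨a, b, hab, h⟩ h2
          · simp at hr
            obtain ⟨rfl, rfl⟩ := hr
            exact h1 (h.subset (by simp))
        · intro h
          by_cases hx : x ∈ y :: l
          · refine ⟨x, y, hxy, ?_⟩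
            have : x ∈ l := by simpa [hxy] using hx
            simpa using this
          · have : ¬ (collapse (y :: l)).Nodup := fun h' => h ⟨hx, h'⟩
            obtain ⟨a, b, hab, h⟩ := ih.2 this
            exact ⟨a, b, hab, h.cons _⟩

theorem sortedWord_iff (l : List ℕ) : SortedWord l ↔ (collapse l).Nodup := by
  rw [← not_iff_not, ← hasABA_iff]
  unfold SortedWord HasABA
  push Not
  rfl

theorem psi_nil (st : List ℕ) : psi [] st = st := by rw [psi]
theorem psi_empty (x : ℕ) (xs : List ℕ) : psi (x :: xs) [] = psi xs [x] := by rw [psi]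
theorem psi_same (x : ℕ) (xs st : List ℕ) : psi (x :: xs) (x :: st) = psi xs (x :: st) := by
  rw [psi]; simp
theorem psi_pop {x t : ℕ} {st : List ℕ} (xs : List ℕ) (h : t ≠ x) (hx : x ∈ st) :
    psi (x :: xs) (t :: st) = t :: psi (x :: xs) st := by
  rw [psi]; simp [h, hx]
theorem psi_push {x : ℕ} {st : List ℕ} (xs : List ℕ) (hx : x ∉ st) :
    psi (x :: xs) st = psi xs (x :: st) := by
  cases st with
  | nil => exact psi_empty x xs
  | cons t st =>
    simp at hx
    rw [psi]; simp [hx, Ne.symm hx.1]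

theorem collapse_phiAux (xs st : List ℕ) (hst : (collapse st).Nodup) :
    collapse (phiAux xs st) = collapse (psi xs (collapse st)) := by
  induction xs, st using phiAux.induct with
  | case1 st => rw [phiAux, psi_nil, collapse_idem]
  | case2 x xs ih =>
    rw [phiAux, ih (by simp [collapse])]
    simp [collapse, psi_empty]
  | case3 x xs t st h ih =>
    rw [phiAux, if_pos h]
    rw [hasABA_iff] at h
    have hxt : t ≠ x := by
      rintro rfl
      rw [collapse_cons_cons_same] at h
      exact h hst
    rw [collapse_cons_cons_ne hxt.symm, List.nodup_cons, mem_collapse] at h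
    have hx : x ∈ st := by
      by_contra hx
      exact h ⟨by simp [hx, hxt.symm], hst⟩
    by_cases hh : (collapse st).head? = some t
    · have e : collapse (t :: st) = collapse st := by rw [collapse, if_pos hh]
      rw [e] at hst ⊢
      have ih := ih hst
      rw [collapse, ih]
      obtain ⟨r, hr⟩ : ∃ r, collapse st = t :: r := by
        cases hc : collapse st with
        | nil => simp [hc] at hh
        | cons y r => simp [hc] at hh; exact ⟨r, by rw [hh]⟩
      have hxr : x ∈ r := by
        have := mem_collapse.2 hx
        rw [hr] at this
        simpa [hxt.symm] using this
      rw [if_pos]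
      rw [collapse_head, hr, psi_pop _ hxt hxr]; rfl
    · have e : collapse (t :: st) = t :: collapse st := by rw [collapse, if_neg hh]
      rw [e] at hst ⊢
      rw [psi_pop _ hxt (mem_collapse.2 hx)]
      exact collapse_cons_congr _ (ih (List.nodup_cons.1 hst).2)
  | case4 x xs t st h ih =>
    rw [phiAux, if_neg h]
    rw [hasABA_iff, not_not] at h
    rw [ih h]
    by_cases hxt : x = t
    · subst hxt
      rw [collapse_cons_cons_same]
      obtain ⟨r, hr⟩ := collapse_cons_exists x st
      rw [hr, psi_same]
    · rw [collapse_cons_cons_ne hxt] at h ⊢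
      rw [psi_push _ (List.nodup_cons.1 h).1]

theorem psi_step (x : ℕ) (st : List ℕ) : ∃ o s, ∀ l, psi (x :: l) st = o ++ psi l (x :: s) := by
  induction st with
  | nil => exact ⟨[], [], fun l => by simp [psi_empty]⟩
  | cons t st ih =>
    by_cases h : t = x
    · subst h
      exact ⟨[], st, fun l => by simp [psi_same]⟩
    · by_cases hx : x ∈ st
      · obtain ⟨o, s, ih⟩ := ih
        exact ⟨t :: o, s, fun l => by simp [psi_pop _ h hx, ih]⟩
      · refine ⟨[], t :: st, fun l => ?_⟩
        rw [psi_push l (st := t :: st) (by simp [hx, Ne.symm h])]; rfl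

theorem psi_collapse (p st : List ℕ) : psi (collapse p) st = psi p st := by
  induction p generalizing st with
  | nil => rfl
  | cons x l ih =>
    obtain ⟨o, s, h⟩ := psi_step x st
    by_cases hh : (collapse l).head? = some x
    · have e : collapse (x :: l) = collapse l := by rw [collapse, if_pos hh]
      obtain ⟨r, hr⟩ : ∃ r, collapse l = x :: r := by
        cases hc : collapse l with
        | nil => simp [hc] at hh
        | cons y r => simp [hc] at hh; exact ⟨r, by rw [hh]⟩
      rw [e, h, hr, h, ← ih, hr, psi_same]
    · have e : collapse (x :: l) = x :: collapse l := by rw [collapse, if_neg hh]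
      rw [e, h, h, ih]

/-- One pass of the variant machine. -/
def Psi (p : List ℕ) : List ℕ := psi p []

theorem Psi_collapse (p : List ℕ) : Psi (collapse p) = Psi p := psi_collapse p []

theorem collapse_phi (p : List ℕ) : collapse (phi p) = collapse (Psi p) := by
  have := collapse_phiAux p [] (by simp [collapse])
  simpa [collapse, phi, Psi] using this

/-- `p` is not sorted after `j` passes. -/
def Bad (j : ℕ) (p : List ℕ) : Prop := ¬ (collapse (Psi^[j] p)).Nodup

theorem bad_zero (p : List ℕ) : Bad 0 p ↔ ¬ (collapse p).Nodup := Iff.rfl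

theorem bad_succ (j : ℕ) (p : List ℕ) : Bad (j + 1) p ↔ Bad j (Psi p) := Iff.rfl

theorem bad_collapse (j : ℕ) (p : List ℕ) : Bad j (collapse p) ↔ Bad j p := by
  cases j with
  | zero => simp only [bad_zero, collapse_idem]
  | succ j => simp only [bad_succ, Psi_collapse]

theorem bad_iff (j : ℕ) (p : List ℕ) : ¬ SortedWord (phi^[j] p) ↔ Bad j p := by
  rw [sortedWord_iff]
  have : collapse (phi^[j] p) = collapse (Psi^[j] p) := by
    induction j with
    | zero => rfl
    | succ j ih =>
      rw [Function.iterate_succ_apply', Function.iterate_succ_apply', collapse_phi,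
        ← Psi_collapse, ih, Psi_collapse]
  rw [this]; rfl


theorem psi_base (xs st base : List ℕ) (h : ∀ x ∈ xs, x ∉ base) :
    psi xs (st ++ base) = psi xs st ++ base := by
  induction xs, st using psi.induct with
  | case1 st => simp [psi_nil]
  | case2 x xs ih =>
    rw [List.nil_append, psi_push _ (h x (by simp)), psi_empty, ← ih (fun y hy => h y (by simp [hy]))]
    rfl
  | case3 xs t st ih =>
    rw [List.cons_append, psi_same, psi_same, ← ih (fun y hy => h y (by simp [hy]))]
    rfl
  | case4 x xs t st h1 h2 ih =>
    rw [List.cons_append, psi_pop _ h1 h2, psi_pop _ h1 (by simp [h2]), ih h]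
    rfl
  | case5 x xs t st h1 h2 ih =>
    have hx : x ∉ t :: st := by simp [h2, Ne.symm h1]
    rw [psi_push _ hx, psi_push, ← ih (fun y hy => h y (by simp [hy]))]
    · rfl
    · have := h x (by simp)
      simp only [List.mem_append]
      tauto

theorem psi_split_nil (a : ℕ) (v st : List ℕ) (h : a ∉ st) :
    psi (a :: v) (st ++ [a]) = st ++ psi v [a] := by
  induction st with
  | nil => simp [psi_same]
  | cons t st ih =>
    simp at h
    rw [List.cons_append, psi_pop _ (Ne.symm h.1) (by simp), ih h.2]
    rfl

theorem psi_split (a : ℕ) (v xs st : List ℕ) (hx : a ∉ xs) (hst : a ∉ st) :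
    psi (xs ++ a :: v) (st ++ [a]) = psi xs st ++ psi v [a] := by
  induction xs, st using psi.induct with
  | case1 st => simp [psi_nil, psi_split_nil _ _ _ hst]
  | case2 x xs ih =>
    simp at hx
    rw [List.cons_append, List.nil_append, psi_push _ (by simp [Ne.symm hx.1]), psi_empty,
      ← ih hx.2 (by simp [hx.1])]
    rfl
  | case3 xs t st ih =>
    simp at hx
    rw [List.cons_append, List.cons_append, psi_same, psi_same, ← ih hx.2 hst]
    rfl
  | case4 x xs t st h1 h2 ih =>
    simp only [List.mem_cons, not_or] at hst
    rw [List.cons_append, List.cons_append, psi_pop _ h1 h2, psi_pop _ h1 (by simp [h2]),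
      ← List.cons_append, ih hx hst.2]
    rfl
  | case5 x xs t st h1 h2 ih =>
    have hx' : x ∉ t :: st := by simp [h2, Ne.symm h1]
    simp only [List.mem_cons, not_or] at hx
    rw [psi_push _ hx', List.cons_append, psi_push, ← ih hx.2]
    · rfl
    · simp only [List.mem_cons, not_or] at hst ⊢
      exact ⟨hx.1, hst⟩
    · simp only [List.mem_append, not_or]
      exact ⟨hx', by simp [Ne.symm hx.1]⟩

theorem psi_mid (a : ℕ) (s v : List ℕ) (h : a ∉ s) :
    psi (s ++ a :: v) [a] = Psi s ++ psi v [a] := psi_split a v s [] h (by simp)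

theorem psi_last (a : ℕ) (s : List ℕ) (h : a ∉ s) : psi s [a] = Psi s ++ [a] :=
  psi_base s [] [a] (by intro x hx; simp; rintro rfl; exact h hx)

theorem Psi_cons (a : ℕ) (s : List ℕ) : Psi (a :: s) = psi s [a] := psi_empty a s

theorem psi_prefix (u v st : List ℕ) (hu : u.Nodup) (h : ∀ x ∈ u, x ∉ st) :
    psi (u ++ v) st = psi v (u.reverse ++ st) := by
  induction u generalizing st with
  | nil => rfl
  | cons x u ih =>
    rw [List.nodup_cons] at hu
    rw [List.cons_append, psi_push _ (h x (by simp)), ih _ hu.2]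
    · simp
    · intro y hy
      simp only [List.mem_cons, not_or]
      exact ⟨by rintro rfl; exact hu.1 hy, h y (by simp [hy])⟩

theorem Psi_prefix (u v : List ℕ) (hu : u.Nodup) (h : ∀ x ∈ u, x ∉ v) :
    Psi (u ++ v) = Psi v ++ u.reverse := by
  unfold Psi
  rw [psi_prefix u v [] hu (by simp), List.append_nil]
  exact psi_base v [] _ (by intro x hx hx'; exact h x (by simpa using hx') hx)

theorem Psi_nodup (u : List ℕ) (hu : u.Nodup) : Psi u = u.reverse := by
  have := Psi_prefix u [] hu (by simp)
  simpa [Psi, psi_nil] using this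

theorem exists_first_dup (s : List ℕ) (h : ¬ s.Nodup) :
    ∃ u b s0 v, s = u ++ b :: (s0 ++ b :: v) ∧ u.Nodup ∧ b ∉ u ∧ b ∉ s0 ∧
      (∀ x ∈ u, x ∉ s0 ∧ x ∉ v) ∧ Psi s = Psi s0 ++ psi v [b] ++ u.reverse := by
  have h1 : ∃ u b v, s = u ++ b :: v ∧ u.Nodup ∧ b ∉ u ∧ (∀ x ∈ u, x ∉ v) ∧ b ∈ v := by
    induction s with
    | nil => simp at h
    | cons x t ih =>
      by_cases hx : x ∈ t
      · exact ⟨[], x, t, by simp, by simp, by simp, by simp, hx⟩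
      · have : ¬ t.Nodup := fun h' => h (List.nodup_cons.2 ⟨hx, h'⟩)
        obtain ⟨u, b, v, rfl, h1, h2, h3, h4⟩ := ih this
        simp at hx
        refine ⟨x :: u, b, v, by simp, by simp [h1, hx], ?_, ?_, h4⟩
        · simp only [List.mem_cons, not_or]; exact ⟨Ne.symm hx.2.1, h2⟩
        · intro y hy
          rcases List.mem_cons.1 hy with rfl | hy
          · exact hx.2.2
          · exact h3 y hy
  obtain ⟨u, b, v, rfl, h1, h2, h3, h4⟩ := h1
  obtain ⟨s0, v', rfl, h5⟩ := List.eq_append_cons_of_mem h4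
  refine ⟨u, b, s0, v', rfl, h1, h2, h5, ?_, ?_⟩
  · intro x hx
    have := h3 x hx
    simp at this
    tauto
  · rw [Psi_prefix _ _ h1, Psi_cons, psi_mid _ _ _ h5]
    intro x hx hx'
    rcases List.mem_cons.1 hx' with rfl | hx'
    · exact h2 hx
    · exact h3 x hx hx'

theorem count_psi_le (a : ℕ) (xs st : List ℕ) :
    (psi xs st).count a ≤ xs.count a + st.count a := by
  induction xs, st using psi.induct with
  | case1 st => simp [psi_nil]
  | case2 x xs ih =>
    rw [psi_empty]; simp only [List.count_cons, List.count_nil] at *; omega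
  | case3 xs t st ih =>
    rw [psi_same]; simp only [List.count_cons] at *; omega
  | case4 x xs t st h1 h2 ih =>
    rw [psi_pop _ h1 h2]; simp only [List.count_cons] at *; omega
  | case5 x xs t st h1 h2 ih =>
    rw [psi_push _ (by simp [h2, Ne.symm h1])]; simp only [List.count_cons] at *; omega

theorem count_Psi_le (a : ℕ) (s : List ℕ) : (Psi s).count a ≤ s.count a := by
  simpa [Psi] using count_psi_le a s []

theorem count_psi_one (a : ℕ) (v : List ℕ) : (psi v [a]).count a = 1 := by
  induction hn : v.length using Nat.strong_induction_on generalizing v with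
  | _ n ih =>
    have key : ∀ s : List ℕ, a ∉ s → (Psi s).count a = 0 := fun s hs => by
      have := count_Psi_le a s
      rw [List.count_eq_zero.2 hs] at this
      omega
    by_cases h : a ∈ v
    · obtain ⟨s0, v', rfl, h5⟩ := List.eq_append_cons_of_mem h
      rw [psi_mid _ _ _ h5, List.count_append, key _ h5, ih v'.length (by subst hn; simp; omega) v' rfl]
    · rw [psi_last _ _ h, List.count_append, key _ h]; simp

theorem exists_lost (s : List ℕ) (h : ¬ s.Nodup) :
    ∃ b, 2 ≤ s.count b ∧ (Psi s).count b = 1 := by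
  obtain ⟨u, b, s0, v, rfl, h1, h2, h3, h4, h5⟩ := exists_first_dup s h
  refine ⟨b, ?_, ?_⟩
  · simp [List.count_append]; omega
  · have := count_Psi_le b s0
    rw [List.count_eq_zero.2 h3] at this
    rw [h5]
    simp [List.count_append, List.count_reverse, count_psi_one, List.count_eq_zero.2 h2]
    omega

/-- Letters occurring at least twice. -/
def act (p : List ℕ) : Finset ℕ := p.toFinset.filter (fun x => 2 ≤ p.count x)

theorem mem_act {x : ℕ} {p : List ℕ} : x ∈ act p ↔ 2 ≤ p.count x := by
  simp only [act, Finset.mem_filter, List.mem_toFinset, and_iff_right_iff_imp]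
  intro h
  exact List.count_pos_iff.1 (by omega)

theorem act_mono {p q : List ℕ} (h : ∀ x, p.count x ≤ q.count x) : act p ⊆ act q := by
  intro x hx
  rw [mem_act] at *
  exact hx.trans (h x)

theorem act_empty {p : List ℕ} (h : p.Nodup) : act p = ∅ := by
  ext x
  rw [mem_act]
  have := List.nodup_iff_count_le_one.1 h x
  simp; omega

theorem count_collapse_le (x : ℕ) (p : List ℕ) : (collapse p).count x ≤ p.count x :=
  (collapse_sublist p).count_le x

theorem bad_act (j : ℕ) (p : List ℕ) (h : Bad j p) : j + 1 ≤ (act (collapse p)).card := by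
  induction j generalizing p with
  | zero =>
    rw [bad_zero] at h
    obtain ⟨b, hb, -⟩ := exists_lost _ h
    exact Finset.card_pos.2 ⟨b, mem_act.2 hb⟩
  | succ j ih =>
    rw [← bad_collapse, bad_succ] at h
    generalize collapse p = q at h ⊢
    have h1 := ih _ h
    by_cases hq : q.Nodup
    · rw [Psi_nodup q hq] at h1
      have : (collapse q.reverse).Nodup := (List.nodup_reverse.2 hq).sublist (collapse_sublist _)
      rw [act_empty this] at h1
      simp at h1
    · obtain ⟨b, hb, hb1⟩ := exists_lost _ hq
      have : act (collapse (Psi q)) ⊂ act q := by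
        rw [Finset.ssubset_iff_of_subset]
        · refine ⟨b, mem_act.2 hb, ?_⟩
          rw [mem_act]
          have := count_collapse_le b (Psi q)
          omega
        · exact act_mono (fun x => (count_collapse_le _ _).trans (count_Psi_le _ _))
      have := Finset.card_lt_card this
      omega

theorem bad_key (j : ℕ) (p : List ℕ) (b : ℕ) (h : Bad (j + 1) p) (hc : (act p).card ≤ j + 2)
    (hb : 2 ≤ p.count b) (hb1 : (Psi p).count b ≤ 1) (x : ℕ) (hxb : x ≠ b) (hx : 2 ≤ p.count x) :
    2 ≤ (collapse (Psi p)).count x := by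
  rw [bad_succ] at h
  have h1 := bad_act _ _ h
  have h2 : act (collapse (Psi p)) ⊆ (act p).erase b := by
    intro y hy
    rw [Finset.mem_erase]
    constructor
    · rintro rfl
      rw [mem_act] at hy
      have := count_collapse_le y (Psi p)
      omega
    · exact act_mono (fun x => (count_collapse_le _ _).trans (count_Psi_le _ _)) hy
  have h3 : ((act p).erase b).card = (act p).card - 1 := Finset.card_erase_of_mem (mem_act.2 hb)
  have h4 := Finset.eq_of_subset_of_card_le h2 (by omega)
  rw [← mem_act, h4, Finset.mem_erase]
  exact ⟨hxb, mem_act.2 hx⟩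

theorem collapse_eq_self (l : List ℕ) (h : ∀ x, 2 ≤ l.count x → l.count x ≤ (collapse l).count x) :
    collapse l = l := by
  apply (collapse_sublist l).eq_of_length_le
  have : l.Subperm (collapse l) := by
    rw [List.subperm_ext_iff]
    intro x hx
    by_cases h2 : 2 ≤ l.count x
    · exact h x h2
    · have := List.count_pos_iff.2 (mem_collapse.2 hx)
      omega
  exact this.length_le

/-- Decomposition of words with all multiplicities at most two. -/
theorem decomp_two (p : List ℕ) (hp : ¬ p.Nodup) (h2 : ∀ x, p.count x ≤ 2) :
    ∃ u b s0 s1, p = u ++ b :: (s0 ++ b :: s1) ∧ u.Nodup ∧ b ∉ u ∧ b ∉ s0 ∧ b ∉ s1 ∧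
      (∀ x ∈ u, x ∉ s0 ∧ x ∉ s1) ∧ Psi p = Psi s0 ++ (Psi s1 ++ b :: u.reverse) := by
  obtain ⟨u, b, s0, s1, rfl, h3, h4, h5, h6, h7⟩ := exists_first_dup p hp
  have hb : b ∉ s1 := by
    have := h2 b
    simp [List.count_append] at this
    exact List.count_eq_zero.1 (by omega)
  refine ⟨u, b, s0, s1, rfl, h3, h4, h5, hb, h6, ?_⟩
  rw [h7, psi_last _ _ hb]
  simp

/-- Data of a word with multiplicities at most two whose two pieces are duplicate free. -/
theorem step_facts {u s0 s1 : List ℕ} {b : ℕ} (hu : u.Nodup) (hbu : b ∉ u) (hb0 : b ∉ s0)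
    (hb1 : b ∉ s1) (hd : ∀ x ∈ u, x ∉ s0 ∧ x ∉ s1) (hs0 : s0.Nodup) (hs1 : s1.Nodup) :
    (∀ x, x ≠ b → (s0.reverse ++ (s1.reverse ++ b :: u.reverse)).count x =
      (u ++ b :: (s0 ++ b :: s1)).count x) ∧
    (s0.reverse ++ (s1.reverse ++ b :: u.reverse)).count b = 1 ∧
    (u ++ b :: (s0 ++ b :: s1)).count b = 2 ∧
    (∀ x ∈ u, (u ++ b :: (s0 ++ b :: s1)).count x = 1) ∧
    (∀ x, 2 ≤ (u ++ b :: (s0 ++ b :: s1)).count x → x ≠ b → s0.count x = 1 ∧ s1.count x = 1) := by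
  refine ⟨?_, ?_, ?_, ?_, ?_⟩
  · intro x hx
    simp [List.count_append, List.count_reverse, List.count_cons_of_ne (Ne.symm hx)]
    omega
  · simp [List.count_append, List.count_eq_zero.2, hbu, hb0, hb1]
  · simp [List.count_append, List.count_eq_zero.2, hbu, hb0, hb1]
  · intro x hx
    have hxb : b ≠ x := by rintro rfl; exact hbu hx
    have := hd x hx
    have h1 := List.nodup_iff_count_le_one.1 hu x
    have h2 := List.count_pos_iff.2 hx
    simp [List.count_append, List.count_cons_of_ne hxb, List.count_eq_zero.2, this]
    omega
  · intro x hx hxb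
    have h1 := List.nodup_iff_count_le_one.1 hs0 x
    have h2 := List.nodup_iff_count_le_one.1 hs1 x
    by_cases hxu : x ∈ u
    · have h3 := List.nodup_iff_count_le_one.1 hu x
      have := hd x hxu
      simp [List.count_append, List.count_cons_of_ne (Ne.symm hxb), List.count_eq_zero.2 this.1, List.count_eq_zero.2 this.2] at hx
      omega
    · simp [List.count_append, List.count_cons_of_ne (Ne.symm hxb), List.count_eq_zero.2 hxu] at hx
      omega

theorem filter_step {u s0 s1 : List ℕ} {b : ℕ} (hu : u.Nodup) (hbu : b ∉ u) (hb0 : b ∉ s0)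
    (hb1 : b ∉ s1) (hd : ∀ x ∈ u, x ∉ s0 ∧ x ∉ s1) (hs0 : s0.Nodup) (hs1 : s1.Nodup)
    (p q : List ℕ) (hp : p = u ++ b :: (s0 ++ b :: s1))
    (hq : q = s0.reverse ++ (s1.reverse ++ b :: u.reverse)) :
    p.filter (fun x => 2 ≤ p.count x) = b :: (s0.filter (fun x => 2 ≤ p.count x) ++
      b :: s1.filter (fun x => 2 ≤ p.count x)) ∧
    q.filter (fun x => 2 ≤ q.count x) = (s0.filter (fun x => 2 ≤ p.count x)).reverse ++
      (s1.filter (fun x => 2 ≤ p.count x)).reverse ∧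
    act q = (act p).erase b := by
  obtain ⟨f1, f2, f3, f4, f5⟩ := step_facts hu hbu hb0 hb1 hd hs0 hs1
  rw [← hp, ← hq] at f1
  rw [← hq] at f2
  rw [← hp] at f3 f4 f5
  refine ⟨?_, ?_, ?_⟩
  · have : u.filter (fun x => 2 ≤ p.count x) = [] := by
      rw [List.filter_eq_nil_iff]
      intro x hx
      simp [f4 x hx]
    refine (congrArg (List.filter (fun x => decide (2 ≤ p.count x))) hp).trans ?_
    rw [List.filter_append, this, List.nil_append, List.filter_cons_of_pos (by simp [f3]),
      List.filter_append, List.filter_cons_of_pos (by simp [f3])]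
  · have e : ∀ s : List ℕ, b ∉ s → s.filter (fun x => 2 ≤ q.count x) =
        s.filter (fun x => 2 ≤ p.count x) := by
      intro s hs
      apply List.filter_congr
      intro x hx
      rw [f1 x (by rintro rfl; exact hs hx)]
    have e2 : u.reverse.filter (fun x => 2 ≤ q.count x) = [] := by
      rw [e _ (by simpa using hbu), List.filter_eq_nil_iff]
      intro x hx
      simp [f4 x (by simpa using hx)]
    refine (congrArg (List.filter (fun x => decide (2 ≤ q.count x))) hq).trans ?_
    rw [List.filter_append, List.filter_append, List.filter_cons_of_neg (by simp [f2]), e2,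
      e _ (by simpa using hb0), e _ (by simpa using hb1)]
    simp [List.filter_reverse]
  · ext x
    rw [Finset.mem_erase, mem_act, mem_act]
    by_cases hx : x = b
    · subst hx; simp [f2]
    · simp [f1 x hx, hx]

theorem nec (k : ℕ) (p : List ℕ) (h2 : ∀ x, p.count x ≤ 2)
    (hc : (act p).card = k + 1) (hbad : Bad k p) :
    ∃ w, p.filter (fun x => 2 ≤ p.count x) = w ++ w := by
  induction k generalizing p with
  | zero =>
    obtain ⟨x, hx⟩ := Finset.card_eq_one.1 hc
    have hx2 : p.count x = 2 := by
      have := h2 x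
      have : x ∈ act p := by simp [hx]
      rw [mem_act] at this
      omega
    refine ⟨[x], ?_⟩
    have : p.filter (fun x => 2 ≤ p.count x) = List.replicate 2 x := by
      have h3 : p.filter (fun y => y = x) = List.replicate 2 x := by
        rw [List.filter_eq, hx2]
      rw [← h3]
      apply List.filter_congr
      intro y hy
      have := @mem_act y p
      rw [hx, Finset.mem_singleton] at this
      simp [← this]
    rw [this]; rfl
  | succ k ih =>
    have hnd : ¬ p.Nodup := by
      intro h
      rw [act_empty h] at hc
      simp at hc
    obtain ⟨u, b, s0, s1, hp, hu, hbu, hb0, hb1, hd, hPsi⟩ := decomp_two p hnd h2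
    have cz : ∀ s : List ℕ, b ∉ s → (Psi s).count b = 0 := fun s hs => by
      have := count_Psi_le b s
      rw [List.count_eq_zero.2 hs] at this
      omega
    have H := bad_key k p b hbad (by omega)
      (by rw [hp]; simp [List.count_append]; omega)
      (by rw [hPsi]; simp [List.count_append, cz _ hb0, cz _ hb1, List.count_eq_zero.2 hbu])
    have hs0 : s0.Nodup := by
      by_contra hs
      obtain ⟨c, hc2, hc1⟩ := exists_lost _ hs
      have hcb : c ≠ b := by rintro rfl; rw [List.count_eq_zero.2 hb0] at hc2; omega
      have e := h2 c
      have e1 : p.count c = u.count c + (s0.count c + s1.count c) := by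
        rw [hp]; simp [List.count_append, List.count_cons_of_ne (Ne.symm hcb)]
      have := H c hcb (by omega)
      have := count_collapse_le c (Psi p)
      have e2 : (Psi p).count c = (Psi s0).count c + ((Psi s1).count c + u.count c) := by
        rw [hPsi]; simp [List.count_append, List.count_cons_of_ne (Ne.symm hcb)]
      have := count_Psi_le c s1
      omega
    have hs1 : s1.Nodup := by
      by_contra hs
      obtain ⟨c, hc2, hc1⟩ := exists_lost _ hs
      have hcb : c ≠ b := by rintro rfl; rw [List.count_eq_zero.2 hb1] at hc2; omega
      have e := h2 c
      have e1 : p.count c = u.count c + (s0.count c + s1.count c) := by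
        rw [hp]; simp [List.count_append, List.count_cons_of_ne (Ne.symm hcb)]
      have := H c hcb (by omega)
      have := count_collapse_le c (Psi p)
      have e2 : (Psi p).count c = (Psi s0).count c + ((Psi s1).count c + u.count c) := by
        rw [hPsi]; simp [List.count_append, List.count_cons_of_ne (Ne.symm hcb)]
      have := count_Psi_le c s0
      omega
    rw [Psi_nodup _ hs0, Psi_nodup _ hs1] at hPsi
    obtain ⟨g1, g2, g3⟩ := filter_step hu hbu hb0 hb1 hd hs0 hs1 p (Psi p) hp hPsi
    obtain ⟨f1, f2, f3, f4, f5⟩ := step_facts hu hbu hb0 hb1 hd hs0 hs1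
    rw [← hp] at f3 f5
    obtain ⟨w, hw⟩ := ih (Psi p) (fun x => (count_Psi_le _ _).trans (h2 x))
      (by rw [g3, Finset.card_erase_of_mem (mem_act.2 (by omega))]; omega) hbad
    rw [g2] at hw
    have hl : (s0.filter (fun x => 2 ≤ p.count x)).length =
        (s1.filter (fun x => 2 ≤ p.count x)).length := by
      apply List.Perm.length_eq
      rw [List.perm_iff_count]
      intro x
      by_cases hx : 2 ≤ p.count x
      · rw [List.count_filter (by simpa using hx), List.count_filter (by simpa using hx)]
        by_cases hxb : x = b
        · subst hxb; rw [List.count_eq_zero.2 hb0, List.count_eq_zero.2 hb1]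
        · rw [(f5 x hx hxb).1, (f5 x hx hxb).2]
      · rw [List.count_eq_zero.2 (by simp [hx]), List.count_eq_zero.2 (by simp [hx])]
    have hl2 := congrArg List.length hw
    simp only [List.length_append, List.length_reverse] at hl2
    obtain ⟨e1, e2⟩ := List.append_inj hw (by simp; omega)
    refine ⟨b :: s0.filter (fun x => 2 ≤ p.count x), ?_⟩
    rw [g1]
    have : s0.filter (fun x => 2 ≤ p.count x) = s1.filter (fun x => 2 ≤ p.count x) :=
      List.reverse_injective (e1.trans e2.symm)
    rw [← this]
    simp

theorem collapse_eq_of_isChain (l : List ℕ) (h : l.IsChain (· ≠ ·)) : collapse l = l := by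
  induction l with
  | nil => rfl
  | cons x l ih =>
    cases l with
    | nil => simp [collapse]
    | cons y l =>
      rw [List.isChain_cons_cons] at h
      rw [collapse_cons_cons_ne h.1, ih h.2]

theorem suff (k : ℕ) (p w : List ℕ) (hcol : collapse p = p) (h2 : ∀ x, p.count x ≤ 2)
    (hw : p.filter (fun x => 2 ≤ p.count x) = w ++ w) (hk : w.length = k + 1)
    (hlast : ∃ z, p.getLast? = some z ∧ p.count z = 1) : Bad k p := by
  induction k generalizing p w with
  | zero =>
    rw [bad_zero, hcol]
    obtain ⟨x, rfl⟩ := List.length_eq_one_iff.1 hk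
    have : x ∈ p.filter (fun x => 2 ≤ p.count x) := by rw [hw]; simp
    rw [List.mem_filter] at this
    intro h
    have h1 := List.nodup_iff_count_le_one.1 h x
    simp at this
    omega
  | succ k ih =>
    have hnd : ¬ p.Nodup := by
      intro h
      have : p.filter (fun x => 2 ≤ p.count x) = [] := by
        rw [List.filter_eq_nil_iff]
        intro x hx
        have := List.nodup_iff_count_le_one.1 h x
        simp; omega
      rw [this] at hw
      have := congrArg List.length hw
      simp at this
      omega
    obtain ⟨u, b, s0, s1, hp, hu, hbu, hb0, hb1, hd, hPsi⟩ := decomp_two p hnd h2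
    have hwnd : w.Nodup := by
      rw [List.nodup_iff_count_le_one]
      intro x
      have h3 : (w ++ w).count x ≤ p.count x := by
        rw [← hw]; exact List.filter_sublist.count_le x
      have := h2 x
      rw [List.count_append] at h3
      omega
    have hpb : p.count b = 2 := by
      rw [hp]; simp [List.count_append, List.count_eq_zero.2, hbu, hb0, hb1]
    have hfu : u.filter (fun x => 2 ≤ p.count x) = [] := by
      rw [List.filter_eq_nil_iff]
      intro x hx
      have hxb : b ≠ x := by rintro rfl; exact hbu hx
      have h3 := List.nodup_iff_count_le_one.1 hu x
      have : p.count x = u.count x := by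
        rw [hp]
        simp [List.count_append, List.count_cons_of_ne hxb, List.count_eq_zero.2, hd x hx]
      simp; omega
    have hfp : p.filter (fun x => 2 ≤ p.count x) = b :: (s0.filter (fun x => 2 ≤ p.count x) ++
        b :: s1.filter (fun x => 2 ≤ p.count x)) := by
      refine (congrArg (List.filter (fun x => decide (2 ≤ p.count x))) hp).trans ?_
      rw [List.filter_append, hfu, List.nil_append, List.filter_cons_of_pos (by simp [hpb]),
        List.filter_append, List.filter_cons_of_pos (by simp [hpb])]
    obtain ⟨b', v, rfl⟩ : ∃ b' v, w = b' :: v := by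
      cases w with
      | nil => simp at hk
      | cons b' v => exact ⟨b', v, rfl⟩
    rw [hfp, List.cons_append] at hw
    obtain ⟨rfl, hw⟩ := List.cons.inj hw
    have hbv : b ∉ v := (List.nodup_cons.1 hwnd).1
    have hvnd : v.Nodup := (List.nodup_cons.1 hwnd).2
    have hA : s0.filter (fun x => 2 ≤ p.count x) = v ∧ s1.filter (fun x => 2 ≤ p.count x) = v := by
      have e := List.append_inj hw ?_
      · exact ⟨e.1, (List.cons.inj e.2).2⟩
      · have e1 := congrArg (List.idxOf b) hw
        rw [List.idxOf_append_of_notMem (by simp [hb0]), List.idxOf_append_of_notMem hbv] at e1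
        simpa using e1
    have hsn : ∀ s : List ℕ, s.filter (fun x => 2 ≤ p.count x) = v → s.Sublist p → s.Nodup := by
      intro s hs hsp
      rw [List.nodup_iff_count_le_one]
      intro x
      by_contra hx
      have : 2 ≤ p.count x := by have := hsp.count_le x; omega
      have h4 := List.nodup_iff_count_le_one.1 hvnd x
      rw [← hs, List.count_filter (by simpa using this)] at h4
      omega
    have hs0 : s0.Nodup := by
      apply hsn _ hA.1
      rw [hp]
      exact (((List.sublist_append_left s0 (b :: s1)).cons b)).trans (List.sublist_append_right _ _)
    have hs1 : s1.Nodup := by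
      apply hsn _ hA.2
      rw [hp]
      exact ((((List.sublist_cons_self b s1).trans (List.sublist_append_right s0 _)).cons b)).trans
        (List.sublist_append_right _ _)
    rw [Psi_nodup _ hs0, Psi_nodup _ hs1] at hPsi
    obtain ⟨g1, g2, g3⟩ := filter_step hu hbu hb0 hb1 hd hs0 hs1 p (Psi p) hp hPsi
    obtain ⟨f1, f2, f3, f4, f5⟩ := step_facts hu hbu hb0 hb1 hd hs0 hs1
    rw [← hp, ← hPsi] at f1
    rw [← hPsi] at f2
    rw [← hp] at f4
    rw [bad_succ]
    have chn : ∀ s : List ℕ, s.Nodup → s.IsChain (· ≠ ·) := fun s hs => List.Pairwise.isChain hs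
    refine ih (Psi p) v.reverse ?_ (fun x => (count_Psi_le _ _).trans (h2 x)) ?_ ?_ ?_
    · apply collapse_eq_of_isChain
      rw [hPsi, List.isChain_append]
      refine ⟨chn _ (List.nodup_reverse.2 hs0), chn _ ?_, ?_⟩
      · rw [List.nodup_append]
        refine ⟨List.nodup_reverse.2 hs1, by simp [hu, hbu], ?_⟩
        intro x hx y hy
        rintro rfl
        simp at hx hy
        rcases hy with rfl | hy
        · exact hb1 hx
        · exact (hd x hy).2 hx
      · intro x hx y hy
        rintro rfl
        have hx0 : x ∈ s0 := by simpa using List.mem_of_mem_getLast? hx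
        obtain ⟨z, hz, hz1⟩ := hlast
        rcases List.eq_nil_or_concat s1 with h | ⟨r, y, h⟩
        · subst h
          simp at hy
          subst hy
          exact hb0 hx0
        · subst h
          simp at hy
          subst hy
          have hp' : p = (u ++ b :: (s0 ++ b :: r)) ++ [y] := by rw [hp]; simp
          rw [hp', List.getLast?_concat] at hz
          obtain rfl := Option.some.inj hz
          have h5 := List.count_pos_iff.2 hx0
          rw [hp] at hz1
          simp [List.count_append, List.count_cons] at hz1
          omega
    · rw [g2, hA.1, hA.2]
    · simpa using hk
    · cases u with
      | nil => exact ⟨b, by rw [hPsi]; simp, f2⟩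
      | cons c u =>
        refine ⟨c, by rw [hPsi]; simp [List.getLast?_append, List.getLast?_cons], ?_⟩
        rw [f1 c (by rintro rfl; exact hbu (by simp)), f4 c (by simp)]


theorem suff_ww (w : List ℕ) (a : ℕ) (hw : w.Nodup) (ha : a ∉ w) (hl : 2 ≤ w.length) :
    Bad (w.length - 1) (w ++ w ++ [a]) := by
  have hcnt : ∀ x, (w ++ w ++ [a]).count x = 2 * w.count x + [a].count x := by
    intro x; simp [List.count_append]; omega
  have hca : w.count a = 0 := List.count_eq_zero.2 ha
  have hla : (w ++ w ++ [a]).count a = 1 := by rw [hcnt, hca]; simp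
  refine suff (w.length - 1) (w ++ w ++ [a]) w ?_ ?_ ?_ (by omega) ⟨a, by simp, hla⟩
  · apply collapse_eq_of_isChain
    rw [List.append_assoc, List.isChain_append]
    refine ⟨List.Pairwise.isChain hw, List.Pairwise.isChain ?_, ?_⟩
    · rw [List.pairwise_append]
      refine ⟨hw, by simp, ?_⟩
      intro x hx y hy
      simp at hy
      subst hy
      rintro rfl
      exact ha hx
    · intro x hx y hy
      rintro rfl
      match w, hw, hl with
      | z :: z' :: t, hw, _ =>
        simp at hy
        subst hy
        rw [List.nodup_cons] at hw
        apply hw.1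
        rw [List.getLast?_cons_cons] at hx
        exact List.mem_of_mem_getLast? hx
  · intro x
    rw [hcnt]
    have := List.nodup_iff_count_le_one.1 hw x
    by_cases hx : x = a
    · subst hx; simp [hca]
    · have : [a].count x = 0 := List.count_eq_zero.2 (by simpa using hx)
      omega
  · have : w.filter (fun x => 2 ≤ (w ++ w ++ [a]).count x) = w := by
      rw [List.filter_eq_self]
      intro x hx
      have := List.count_pos_iff.2 hx
      rw [hcnt]
      simp; omega
    rw [List.filter_append, List.filter_append, this, List.filter_cons_of_neg]
    · simp
    · rw [hla]; simp

theorem nec_ww (l : List ℕ) (a k : ℕ) (ha : a ∉ l) (h2 : ∀ x ∈ l, l.count x = 2)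
    (hk : l.toFinset.card = k + 1) (hbad : Bad k (l ++ [a])) :
    ∃ w, l = w ++ w ∧ w.Nodup := by
  have hla : (l ++ [a]).count a = 1 := by simp [List.count_append, List.count_eq_zero.2 ha]
  have hlx : ∀ x, x ≠ a → (l ++ [a]).count x = l.count x := by
    intro x hx; simp [List.count_append, List.count_cons_of_ne (Ne.symm hx)]
  have hxa : ∀ x ∈ l, x ≠ a := by rintro x hx rfl; exact ha hx
  have q1 : ∀ x, (l ++ [a]).count x ≤ 2 := by
    intro x
    by_cases hx : x = a
    · rw [hx, hla]; omega
    · rw [hlx x hx]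
      by_cases hxl : x ∈ l
      · rw [h2 x hxl]
      · rw [List.count_eq_zero.2 hxl]; omega
  have q2 : (act (l ++ [a])).card = k + 1 := by
    rw [← hk]
    congr 1
    ext x
    rw [mem_act, List.mem_toFinset]
    by_cases hx : x = a
    · subst hx; rw [hla]; simp [ha]
    · rw [hlx x hx]
      constructor
      · intro h; exact List.count_pos_iff.1 (by omega)
      · intro h; rw [h2 x h]
  obtain ⟨w, hw⟩ := nec k (l ++ [a]) q1 q2 hbad
  have e : l.filter (fun x => 2 ≤ (l ++ [a]).count x) = l := by
    rw [List.filter_eq_self]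
    intro x hx
    rw [hlx x (hxa x hx), h2 x hx]; simp
  rw [List.filter_append, e, List.filter_cons_of_neg (by rw [hla]; simp)] at hw
  simp at hw
  refine ⟨w, hw, ?_⟩
  rw [List.nodup_iff_count_le_one]
  intro x
  by_cases hx : x ∈ l
  · have := h2 x hx
    rw [hw, List.count_append] at this
    omega
  · have : x ∉ w := by intro h; apply hx; rw [hw]; simp [h]
    rw [List.count_eq_zero.2 this]; omega

theorem nil_of_nodup_append {w e : List ℕ} (h : (w ++ e).Nodup) (he : ∀ x ∈ e, x ∈ w) : e = [] := by
  rw [List.nodup_append] at h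
  apply List.eq_nil_iff_forall_not_mem.2
  intro x hx
  exact h.2.2 x (he x hx) x hx rfl

theorem nil_of_last_block {X Y w e : List ℕ} (h : X ++ Y = w ++ e) (hY : Y ≠ [])
    (he : ∀ x ∈ e, x ∈ w) (hc : ∀ y ∈ Y, (X ++ Y).count y ≤ 1) : e = [] := by
  by_contra hne
  obtain ⟨Y', y, rfl⟩ := (List.eq_nil_or_concat Y).resolve_left hY
  obtain ⟨e', z, rfl⟩ := (List.eq_nil_or_concat e).resolve_left hne
  have := congrArg List.getLast? h
  simp at this
  subst this
  have h1 := hc y (by simp)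
  rw [h] at h1
  have h2 := List.count_pos_iff.2 (he y (by simp))
  simp [List.count_append] at h1
  omega

/-- The three families. -/
def FamA (p : List ℕ) (a : ℕ) (l k t : List ℕ) : Prop :=
  p = a :: (l ++ k ++ a :: (k ++ t ++ a :: (t ++ l)))
def FamB (p : List ℕ) (a c : ℕ) (l k t : List ℕ) : Prop :=
  p = a :: (l ++ c :: (k ++ c :: t) ++ a :: (l ++ c :: (t ++ k)))
def FamC (p : List ℕ) (a c : ℕ) (l k t : List ℕ) : Prop :=
  p = a :: (l ++ c :: (k ++ t) ++ a :: (l ++ c :: (t ++ c :: k)))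

theorem split_three {s0 s1 s2 w : List ℕ} (hw : w.Nodup) (h0 : s0.Nodup) (h1 : s1.Nodup)
    (h2 : s2.Nodup) (h : s0.reverse ++ (s1.reverse ++ s2.reverse) = w ++ w) :
    ∃ l k t, s0 = l ++ k ∧ s1 = k ++ t ∧ s2 = t ++ l ∧ (l ++ k ++ t).Nodup := by
  have n0 := List.nodup_reverse.2 h0
  have n1 := List.nodup_reverse.2 h1
  have n2 := List.nodup_reverse.2 h2
  obtain ⟨e, he1, he2⟩ : ∃ e, w = s0.reverse ++ e ∧ s1.reverse ++ s2.reverse = e ++ w := by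
    rcases List.append_eq_append_iff.1 h with ⟨e, h3, h4⟩ | ⟨e, h3, h4⟩
    · exact ⟨e, h3, h4⟩
    · have : e = [] := nil_of_nodup_append (h3 ▸ n0) (by rw [h4]; simp +contextual)
      subst this
      exact ⟨[], by simp [h3], by simp [h4]⟩
  obtain ⟨f, hf1, hf2⟩ : ∃ f, s1.reverse = e ++ f ∧ w = f ++ s2.reverse := by
    rcases List.append_eq_append_iff.1 he2 with ⟨f, h3, h4⟩ | ⟨f, h3, h4⟩
    · have : f = [] := by
        apply nil_of_nodup_append (List.nodup_append_comm.1 (h4 ▸ n2))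
        intro x hx
        rw [he1, h3]; simp [hx]
      subst this
      exact ⟨[], by simp [h3], by simp [h4]⟩
    · exact ⟨f, h3, h4⟩
  have h5 : s0.reverse ++ e = f ++ s2.reverse := by rw [← he1, hf2]
  obtain ⟨g, hg1, hg2⟩ : ∃ g, s0.reverse = f ++ g ∧ s2.reverse = g ++ e := by
    rcases List.append_eq_append_iff.1 h5 with ⟨g, h3, h4⟩ | ⟨g, h3, h4⟩
    · have : g = [] := by
        rw [hf1, h3, h4] at n1
        apply List.eq_nil_iff_forall_not_mem.2
        intro x hx
        rw [List.nodup_append] at n1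
        exact n1.2.2 x (by simp [hx]) x (by simp [hx]) rfl
      subst this
      exact ⟨[], by simp [h3], by simp [h4]⟩
    · exact ⟨g, h3, h4⟩
  refine ⟨g.reverse, f.reverse, e.reverse, ?_, ?_, ?_, ?_⟩
  · rw [← List.reverse_append, ← hg1, List.reverse_reverse]
  · rw [← List.reverse_append, ← hf1, List.reverse_reverse]
  · rw [← List.reverse_append, ← hg2, List.reverse_reverse]
  · rw [he1, hg1] at hw
    rw [List.nodup_iff_count_le_one] at hw ⊢
    intro x
    have := hw x
    simp [List.count_append] at this ⊢
    omega

theorem exists_three (p : List ℕ) (n : ℕ) (hN : p.toFinset.card = n) (hlen : p.length = 2 * n + 1)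
    (h2 : ∀ x ∈ p, 2 ≤ p.count x) :
    ∃ c ∈ p, p.count c = 3 ∧ ∀ x ∈ p, x ≠ c → p.count x = 2 := by
  have hs : ∑ x ∈ p.toFinset, (p.count x - 2) = 1 := by
    have h1 : ∑ x ∈ p.toFinset, p.count x = 2 * n + 1 := by
      rw [← hlen]; exact List.sum_toFinset_count_eq_length p
    have h3 : ∑ x ∈ p.toFinset, (p.count x - 2) + ∑ x ∈ p.toFinset, 2 = ∑ x ∈ p.toFinset, p.count x := by
      rw [← Finset.sum_add_distrib]
      apply Finset.sum_congr rfl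
      intro x hx
      have := h2 x (by simpa using hx)
      omega
    simp [hN] at h3
    omega
  obtain ⟨c, hc, hc0⟩ : ∃ c ∈ p.toFinset, p.count c - 2 ≠ 0 :=
    Finset.exists_ne_zero_of_sum_ne_zero (by rw [hs]; simp)
  rw [← Finset.add_sum_erase _ _ hc] at hs
  have hz : ∑ x ∈ p.toFinset.erase c, (p.count x - 2) = 0 := by omega
  rw [Finset.sum_eq_zero_iff] at hz
  refine ⟨c, by simpa using hc, by omega, ?_⟩
  intro x hx hxc
  have := hz x (by simp [hx, hxc])
  have := h2 x hx
  omega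


theorem Psi_two (a : ℕ) (s0 s1 : List ℕ) (h0 : a ∉ s0) (h1 : a ∉ s1) :
    Psi (a :: (s0 ++ a :: s1)) = Psi s0 ++ Psi s1 ++ [a] := by
  rw [Psi_cons, psi_mid _ _ _ h0, psi_last _ _ h1]; simp

theorem Psi_three (a : ℕ) (s0 s1 s2 : List ℕ) (h0 : a ∉ s0) (h1 : a ∉ s1) (h2 : a ∉ s2) :
    Psi (a :: (s0 ++ a :: (s1 ++ a :: s2))) = Psi s0 ++ (Psi s1 ++ Psi s2) ++ [a] := by
  rw [Psi_cons, psi_mid _ _ _ h0, psi_mid _ _ _ h1, psi_last _ _ h2]; simp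

theorem Psi_dup_block (c : ℕ) (l k t : List ℕ) (h : (c :: (l ++ k)).Nodup)
    (h' : (c :: (l ++ t)).Nodup) :
    Psi (l ++ c :: (k ++ c :: t)) = k.reverse ++ (t.reverse ++ c :: l.reverse) := by
  simp only [List.nodup_cons, List.mem_append, not_or, List.nodup_append] at h h'
  rw [Psi_prefix _ _ h.2.1, Psi_two _ _ _ h.1.2 h'.1.2, Psi_nodup _ h.2.2.1, Psi_nodup _ h'.2.2.1]
  · simp
  · intro x hx hx'
    simp only [List.mem_cons, List.mem_append] at hx'
    rcases hx' with rfl | hx' | rfl | hx'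
    · exact h.1.1 hx
    · exact h.2.2.2 x hx x hx' rfl
    · exact h.1.1 hx
    · exact h'.2.2.2 x hx x hx' rfl

theorem suffA (p l k t : List ℕ) (a n : ℕ) (hn : 3 ≤ n) (hp : FamA p a l k t)
    (hnd : (a :: (l ++ k ++ t)).Nodup) (hl : (l ++ k ++ t).length = n - 1) : Bad (n - 1) p := by
  obtain ⟨n, rfl⟩ : ∃ m, n = m + 2 := ⟨n - 2, by omega⟩
  rw [show n + 2 - 1 = n + 1 by omega, bad_succ, hp]
  have hc : ∀ x, (l ++ k ++ t).count x ≤ 1 := List.nodup_iff_count_le_one.1 (List.nodup_cons.1 hnd).2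
  have ha := (List.nodup_cons.1 hnd).1
  simp only [List.mem_append, not_or] at ha
  have nd : ∀ s : List ℕ, (∀ x, s.count x ≤ (l ++ k ++ t).count x) → s.Nodup := fun s hs =>
    List.nodup_iff_count_le_one.2 (fun x => (hs x).trans (hc x))
  rw [Psi_three, Psi_nodup, Psi_nodup, Psi_nodup]
  · have := suff_ww (k.reverse ++ (l.reverse ++ t.reverse)) a
      (nd _ (by intro x; simp [List.count_append]; omega)) (by simp [ha]) (by simp at hl ⊢; omega)
    have e : (k.reverse ++ (l.reverse ++ t.reverse)).length - 1 = n := by simp at hl ⊢; omega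
    rw [e] at this
    simpa using this
  · apply nd; intro x; simp [List.count_append]; omega
  · apply nd; intro x; simp [List.count_append]
  · apply nd; intro x; simp [List.count_append]
  · simp [ha]
  · simp [ha]
  · simp [ha]

theorem suffB (p l k t : List ℕ) (a c n : ℕ) (hn : 3 ≤ n) (hp : FamB p a c l k t)
    (hnd : (a :: (l ++ c :: (k ++ t))).Nodup) (hl : (l ++ c :: (k ++ t)).length = n - 1) :
    Bad (n - 1) p := by
  obtain ⟨n, rfl⟩ : ∃ m, n = m + 2 := ⟨n - 2, by omega⟩
  rw [show n + 2 - 1 = n + 1 by omega, bad_succ, hp]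
  have hc : ∀ x, (l ++ c :: (k ++ t)).count x ≤ 1 :=
    List.nodup_iff_count_le_one.1 (List.nodup_cons.1 hnd).2
  have ha := (List.nodup_cons.1 hnd).1
  simp only [List.mem_append, List.mem_cons, not_or] at ha
  have nd : ∀ s : List ℕ, (∀ x, s.count x ≤ (l ++ c :: (k ++ t)).count x) → s.Nodup := fun s hs =>
    List.nodup_iff_count_le_one.2 (fun x => (hs x).trans (hc x))
  rw [Psi_two, Psi_dup_block, Psi_nodup]
  · have := suff_ww (k.reverse ++ (t.reverse ++ c :: l.reverse)) a
      (nd _ (by intro x; simp [List.count_append, List.count_cons]; omega)) (by simp [ha])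
      (by simp at hl ⊢; omega)
    have e : (k.reverse ++ (t.reverse ++ c :: l.reverse)).length - 1 = n := by simp at hl ⊢; omega
    rw [e] at this
    simpa using this
  · apply nd; intro x; simp [List.count_append, List.count_cons]; omega
  · apply nd; intro x; simp [List.count_append, List.count_cons]; omega
  · apply nd; intro x; simp [List.count_append, List.count_cons]; omega
  · simp [ha]
  · simp [ha]

theorem suffC (p l k t : List ℕ) (a c n : ℕ) (hn : 3 ≤ n) (hp : FamC p a c l k t)
    (hnd : (a :: (l ++ c :: (k ++ t))).Nodup) (hl : (l ++ c :: (k ++ t)).length = n - 1) :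
    Bad (n - 1) p := by
  obtain ⟨n, rfl⟩ : ∃ m, n = m + 2 := ⟨n - 2, by omega⟩
  rw [show n + 2 - 1 = n + 1 by omega, bad_succ, hp]
  have hc : ∀ x, (l ++ c :: (k ++ t)).count x ≤ 1 :=
    List.nodup_iff_count_le_one.1 (List.nodup_cons.1 hnd).2
  have ha := (List.nodup_cons.1 hnd).1
  simp only [List.mem_append, List.mem_cons, not_or] at ha
  have nd : ∀ s : List ℕ, (∀ x, s.count x ≤ (l ++ c :: (k ++ t)).count x) → s.Nodup := fun s hs =>
    List.nodup_iff_count_le_one.2 (fun x => (hs x).trans (hc x))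
  rw [Psi_two, Psi_dup_block, Psi_nodup]
  · have := suff_ww (t.reverse ++ (k.reverse ++ c :: l.reverse)) a
      (nd _ (by intro x; simp [List.count_append, List.count_cons]; omega)) (by simp [ha])
      (by simp at hl ⊢; omega)
    have e : (t.reverse ++ (k.reverse ++ c :: l.reverse)).length - 1 = n := by simp at hl ⊢; omega
    rw [e] at this
    simpa using this
  · apply nd; intro x; simp
  · apply nd; intro x; simp [List.count_append, List.count_cons]; omega
  · apply nd; intro x; simp [List.count_append, List.count_cons]; omega
  · simp [ha]
  · simp [ha]

/-- Structure of a piece with repeated letters, where only the letter `c` may survive. -/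
theorem dup_piece (s : List ℕ) (c : ℕ) (hs : ¬ s.Nodup) (h2 : s.count c ≤ 2)
    (hlost : ∀ x, x ≠ c → 2 ≤ s.count x → (Psi s).count x = s.count x)
    (hlost2 : ∀ x, x ≠ c → s.count x ≤ 2) :
    ∃ u r v, s = u ++ c :: (r ++ c :: v) ∧ (c :: (u ++ r)).Nodup ∧ (c :: (u ++ v)).Nodup := by
  obtain ⟨u, b, r, v, rfl, h3, h4, h5, h6, h7⟩ := exists_first_dup s hs
  have cz : ∀ s : List ℕ, b ∉ s → (Psi s).count b = 0 := fun s hs => by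
    have := count_Psi_le b s
    rw [List.count_eq_zero.2 hs] at this
    omega
  have hbc : b = c := by
    by_contra hbc
    have h8 : 2 ≤ (u ++ b :: (r ++ b :: v)).count b := by simp [List.count_append]; omega
    have h9 := hlost b hbc h8
    rw [h7] at h9
    have : (Psi r ++ psi v [b] ++ u.reverse).count b = 1 := by
      simp [List.count_append, cz _ h5, count_psi_one, List.count_eq_zero.2 h4]
    omega
  subst hbc
  have hbv : b ∉ v := by
    simp [List.count_append] at h2
    exact List.count_eq_zero.1 (by omega)
  rw [psi_last _ _ hbv] at h7
  have hcnt : ∀ x, x ≠ b → (u ++ b :: (r ++ b :: v)).count x = u.count x + r.count x + v.count x := by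
    intro x hx; simp [List.count_append, List.count_cons_of_ne (Ne.symm hx)]; omega
  have hcnt' : ∀ x, x ≠ b → (Psi (u ++ b :: (r ++ b :: v))).count x =
      u.count x + (Psi r).count x + (Psi v).count x := by
    intro x hx; rw [h7]; simp [List.count_append, List.count_cons_of_ne (Ne.symm hx)]; omega
  have hr : r.Nodup := by
    by_contra hr
    obtain ⟨x, hx2, hx1⟩ := exists_lost _ hr
    have hxb : x ≠ b := by rintro rfl; rw [List.count_eq_zero.2 h5] at hx2; omega
    have e1 := hcnt x hxb
    have e2 := hcnt' x hxb
    have e3 := hlost x hxb (by omega)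
    have := count_Psi_le x v
    omega
  have hv : v.Nodup := by
    by_contra hv
    obtain ⟨x, hx2, hx1⟩ := exists_lost _ hv
    have hxb : x ≠ b := by rintro rfl; rw [List.count_eq_zero.2 hbv] at hx2; omega
    have e1 := hcnt x hxb
    have e2 := hcnt' x hxb
    have e3 := hlost x hxb (by omega)
    have := count_Psi_le x r
    omega
  refine ⟨u, r, v, rfl, ?_, ?_⟩
  · simp only [List.nodup_cons, List.mem_append, not_or, List.nodup_append]
    refine ⟨⟨h4, h5⟩, h3, hr, ?_⟩
    rintro x hx y hy rfl
    exact (h6 x hx).1 hy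
  · simp only [List.nodup_cons, List.mem_append, not_or, List.nodup_append]
    refine ⟨⟨h4, hbv⟩, h3, hv, ?_⟩
    rintro x hx y hy rfl
    exact (h6 x hx).2 hy

theorem main_nec (p : List ℕ) (n : ℕ) (hn : 3 ≤ n) (hN : p.toFinset.card = n)
    (hlen : p.length = 2 * n + 1) (hbad : Bad (n - 1) p) :
    (∃ a l k t, FamA p a l k t ∧ (a :: (l ++ k ++ t)).Nodup) ∨
    (∃ a c l k t, FamB p a c l k t ∧ (a :: (l ++ c :: (k ++ t))).Nodup) ∨
    (∃ a c l k t, FamC p a c l k t ∧ (a :: (l ++ c :: (k ++ t))).Nodup) := by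
  have hb := bad_act _ _ hbad
  have hsub : act (collapse p) ⊆ p.toFinset := by
    intro x hx
    rw [mem_act] at hx
    have := count_collapse_le x p
    simp only [List.mem_toFinset]
    exact List.count_pos_iff.1 (by omega)
  have heq := Finset.eq_of_subset_of_card_le hsub (by omega)
  have hge : ∀ x ∈ p, 2 ≤ p.count x := by
    intro x hx
    have : x ∈ act (collapse p) := by rw [heq]; simpa using hx
    rw [mem_act] at this
    have := count_collapse_le x p
    omega
  obtain ⟨c, hcp, hc3, hc2⟩ := exists_three p n hN hlen hge
  obtain ⟨n, rfl⟩ : ∃ m, n = m + 2 := ⟨n - 2, by omega⟩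
  rw [show n + 2 - 1 = n + 1 by omega] at hbad
  cases p with
  | nil => simp at hcp
  | cons a t =>
  have hactp : (act (a :: t)).card ≤ n + 2 := by
    rw [← hN]
    exact Finset.card_le_card (Finset.filter_subset _ _)
  have H := bad_key n (a :: t) a hbad hactp (hge a (by simp)) (by rw [Psi_cons, count_psi_one])
  have H : ∀ x ∈ a :: t, x ≠ a → 2 ≤ (Psi (a :: t)).count x := by
    intro x hx hxa
    exact (H x hxa (hge x hx)).trans (count_collapse_le _ _)
  rw [bad_succ] at hbad
  have hat : a ∈ t := by
    have := hge a (by simp)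
    simp at this
    exact this
  obtain ⟨s0, v, rfl, ha0⟩ := List.eq_append_cons_of_mem hat
  -- finishing: once `Psi p = l ++ [a]` with right counts, `l = w ++ w`
  have fin : ∀ l, Psi (a :: (s0 ++ a :: v)) = l ++ [a] → l.count c ≤ 2 →
      ∃ w, l = w ++ w ∧ w.Nodup := by
    intro l hl hlc
    have hal : a ∉ l := by
      have := count_psi_one a (s0 ++ a :: v)
      rw [← Psi_cons, hl] at this
      simp [List.count_append] at this
      exact List.count_eq_zero.1 this
    have hcl : ∀ x, x ≠ a → (Psi (a :: (s0 ++ a :: v))).count x = l.count x := by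
      intro x hx; rw [hl]; simp [List.count_append, List.count_cons_of_ne (Ne.symm hx)]
    have hmem : ∀ x ∈ l, x ∈ a :: (s0 ++ a :: v) := by
      intro x hx
      have h1 := List.count_pos_iff.2 hx
      have h2 := count_Psi_le x (a :: (s0 ++ a :: v))
      rw [hcl x (by rintro rfl; exact hal hx)] at h2
      exact List.count_pos_iff.1 (by omega)
    rw [hl] at hbad
    refine nec_ww l a n hal ?_ ?_ hbad
    · intro x hx
      have hxa : x ≠ a := by rintro rfl; exact hal hx
      have h1 := H x (hmem x hx) hxa
      have h2 := count_Psi_le x (a :: (s0 ++ a :: v))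
      rw [hcl x hxa] at h1 h2
      by_cases hxc : x = c
      · subst hxc; omega
      · rw [hc2 x (hmem x hx) hxc] at h2; omega
    · have : l.toFinset = (a :: (s0 ++ a :: v)).toFinset.erase a := by
        ext x
        rw [Finset.mem_erase, List.mem_toFinset, List.mem_toFinset]
        constructor
        · intro hx
          exact ⟨by rintro rfl; exact hal hx, hmem x hx⟩
        · rintro ⟨h1, h2⟩
          have := H x h2 h1
          rw [hcl x h1] at this
          exact List.count_pos_iff.1 (by omega)
      rw [this, Finset.card_erase_of_mem (by simp), hN]
      omega
  by_cases hac : a = c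
  · left
    subst hac
    have hav : a ∈ v := by
      simp [List.count_append, List.count_eq_zero.2 ha0] at hc3
      exact List.count_pos_iff.1 (by omega)
    obtain ⟨s1, s2, rfl, ha1⟩ := List.eq_append_cons_of_mem hav
    have ha2 : a ∉ s2 := by
      simp [List.count_append, List.count_eq_zero.2 ha0, List.count_eq_zero.2 ha1] at hc3
      exact List.count_eq_zero.1 hc3
    have hPsi := Psi_three a s0 s1 s2 ha0 ha1 ha2
    have hpc : ∀ x, x ≠ a → (a :: (s0 ++ a :: (s1 ++ a :: s2))).count x =
        s0.count x + s1.count x + s2.count x := by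
      intro x hx; simp [List.count_append, List.count_cons_of_ne (Ne.symm hx)]; omega
    have hqc : ∀ x, x ≠ a → (Psi (a :: (s0 ++ a :: (s1 ++ a :: s2)))).count x =
        (Psi s0).count x + (Psi s1).count x + (Psi s2).count x := by
      intro x hx; rw [hPsi]; simp [List.count_append, List.count_cons_of_ne (Ne.symm hx)]; omega
    have key : ∀ x, x ≠ a → s0.count x = 2 ∨ s1.count x = 2 ∨ s2.count x = 2 ∨
        (s0.count x ≤ 1 ∧ s1.count x ≤ 1 ∧ s2.count x ≤ 1) := by
      intro x hx
      have h1 := hpc x hx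
      by_cases hxp : x ∈ (a :: (s0 ++ a :: (s1 ++ a :: s2)))
      · have := hc2 x hxp hx
        omega
      · rw [List.count_eq_zero.2 hxp] at h1; omega
    have contra : ∀ x, x ≠ a → 1 ≤ (a :: (s0 ++ a :: (s1 ++ a :: s2))).count x →
        s0.count x + s1.count x + s2.count x = 2 ∧
        (Psi s0).count x + (Psi s1).count x + (Psi s2).count x = 2 := by
      intro x hx hx1
      have hxp := List.count_pos_iff.1 hx1
      have h1 := hc2 x hxp hx
      have h2 := H x hxp hx
      have h3 := count_Psi_le x (a :: (s0 ++ a :: (s1 ++ a :: s2)))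
      have h4 := hpc x hx
      have h5 := hqc x hx
      omega
    have hnd : s0.Nodup ∧ s1.Nodup ∧ s2.Nodup := by
      refine ⟨?_, ?_, ?_⟩ <;>
      · by_contra hs
        obtain ⟨x, hx2, hx1⟩ := exists_lost _ hs
        have hxa : x ≠ a := by
          rintro rfl
          simp [List.count_eq_zero.2 ha0, List.count_eq_zero.2 ha1, List.count_eq_zero.2 ha2] at hx2
        have := contra x hxa (by rw [hpc x hxa]; omega)
        have := count_Psi_le x s0
        have := count_Psi_le x s1
        have := count_Psi_le x s2
        omega
    obtain ⟨n0, n1, n2⟩ := hnd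
    rw [Psi_nodup _ n0, Psi_nodup _ n1, Psi_nodup _ n2] at hPsi
    obtain ⟨w, hw, hwn⟩ := fin _ hPsi (by
      simp [List.count_append, List.count_eq_zero.2 ha0, List.count_eq_zero.2 ha1,
        List.count_eq_zero.2 ha2])
    obtain ⟨l, k, t, rfl, rfl, rfl, hlkt⟩ := split_three hwn n0 n1 n2 hw
    refine ⟨a, l, k, t, rfl, ?_⟩
    rw [List.nodup_cons]
    refine ⟨?_, hlkt⟩
    simp at ha0 ha1 ⊢
    tauto
  · right
    have hav : a ∉ v := by
      have := hc2 a (by simp) hac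
      simp [List.count_append, List.count_eq_zero.2 ha0] at this
      exact List.count_eq_zero.1 this
    have hPsi := Psi_two a s0 v ha0 hav
    have hpc : ∀ x, x ≠ a → (a :: (s0 ++ a :: v)).count x = s0.count x + v.count x := by
      intro x hx; simp [List.count_append, List.count_cons_of_ne (Ne.symm hx)]
    have hqc : ∀ x, x ≠ a → (Psi (a :: (s0 ++ a :: v))).count x =
        (Psi s0).count x + (Psi v).count x := by
      intro x hx; rw [hPsi]; simp [List.count_append, List.count_cons_of_ne (Ne.symm hx)]
    have hca : c ≠ a := Ne.symm hac
    have contra : ∀ x, x ≠ a → x ≠ c → 1 ≤ s0.count x + v.count x →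
        s0.count x + v.count x = 2 ∧ (Psi s0).count x + (Psi v).count x = 2 := by
      intro x hx hxc hx1
      have h4 := hpc x hx
      have h5 := hqc x hx
      have hxp : x ∈ (a :: (s0 ++ a :: v)) := List.count_pos_iff.1 (by omega)
      have h1 := hc2 x hxp hxc
      have h2 := H x hxp hx
      have h3 := count_Psi_le x (a :: (s0 ++ a :: v))
      omega
    have hcc : s0.count c + v.count c = 3 := by rw [← hpc c hca]; exact hc3
    have hccP : 2 ≤ (Psi s0).count c + (Psi v).count c := by rw [← hqc c hca]; exact H c hcp hca
    have hnotnd : ∀ s : List ℕ, a ∉ s → (s = s0 ∨ s = v) → ¬ s.Nodup → s.count c ≤ 2 →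
        ∃ u r q, s = u ++ c :: (r ++ c :: q) ∧ (c :: (u ++ r)).Nodup ∧ (c :: (u ++ q)).Nodup := by
      intro s has hs hnd h2
      apply dup_piece s c hnd h2
      · intro x hxc hx2
        have hxa : x ≠ a := by rintro rfl; rw [List.count_eq_zero.2 has] at hx2; omega
        have e1 := count_Psi_le x s0
        have e2 := count_Psi_le x v
        rcases hs with rfl | rfl
        · have := contra x hxa hxc (by omega); omega
        · have := contra x hxa hxc (by omega); omega
      · intro x hxc
        by_contra hx2
        have hxa : x ≠ a := by rintro rfl; rw [List.count_eq_zero.2 has] at hx2; omega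
        rcases hs with rfl | rfl
        · have := contra x hxa hxc (by omega); omega
        · have := contra x hxa hxc (by omega); omega
    have hle2 : s0.count c ≤ 2 ∧ v.count c ≤ 2 := by
      by_contra hcon
      have hz0 := count_Psi_le c s0
      have hz1 := count_Psi_le c v
      have : s0.count c = 3 ∧ v.count c = 0 ∨ s0.count c = 0 ∧ v.count c = 3 := by omega
      rcases this with ⟨h0, h1⟩ | ⟨h0, h1⟩
      · have hnd : ¬ s0.Nodup := by
          intro h
          have := List.nodup_iff_count_le_one.1 h c
          omega
        obtain ⟨x, hx2, hx1⟩ := exists_lost _ hnd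
        have hxa : x ≠ a := by rintro rfl; rw [List.count_eq_zero.2 ha0] at hx2; omega
        by_cases hxc : x = c
        · subst hxc; omega
        · have := contra x hxa hxc (by omega)
          have := count_Psi_le x v
          omega
      · have hnd : ¬ v.Nodup := by
          intro h
          have := List.nodup_iff_count_le_one.1 h c
          omega
        obtain ⟨x, hx2, hx1⟩ := exists_lost _ hnd
        have hxa : x ≠ a := by rintro rfl; rw [List.count_eq_zero.2 hav] at hx2; omega
        by_cases hxc : x = c
        · subst hxc; omega
        · have := contra x hxa hxc (by omega)
          have := count_Psi_le x s0
          omega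
    have block : ∀ u r q : List ℕ, (c :: (u ++ r)).Nodup → (c :: (u ++ q)).Nodup →
        ∀ y ∈ c :: u.reverse, ((r.reverse ++ q.reverse) ++ c :: u.reverse).count y ≤ 1 := by
      intro u r q m1 m2 y hy
      simp only [List.nodup_cons, List.mem_append, not_or, List.nodup_append] at m1 m2
      obtain ⟨⟨cu, cr⟩, un, -, ur⟩ := m1
      obtain ⟨⟨-, cq⟩, -, -, uq⟩ := m2
      rcases List.mem_cons.1 hy with rfl | hy
      · simp [List.count_append, List.count_eq_zero.2 cu, List.count_eq_zero.2 cr,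
          List.count_eq_zero.2 cq]
      · have hy : y ∈ u := by simpa using hy
        have hyc : c ≠ y := by rintro rfl; exact cu hy
        have h1 : y ∉ r := fun h => ur y hy y h rfl
        have h2 : y ∉ q := fun h => uq y hy y h rfl
        have := List.nodup_iff_count_le_one.1 un y
        simp [List.count_append, List.count_eq_zero.2 h1,
          List.count_eq_zero.2 h2, List.count_cons_of_ne hyc, this]
    by_cases hs0 : s0.Nodup
    · right
      have hv : ¬ v.Nodup := by
        intro hv
        have h1 := List.nodup_iff_count_le_one.1 hs0 c
        have h2 := List.nodup_iff_count_le_one.1 hv c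
        omega
      obtain ⟨u, r, q, rfl, m1, m2⟩ := hnotnd v hav (Or.inr rfl) hv hle2.2
      rw [Psi_nodup _ hs0, Psi_dup_block _ _ _ _ m1 m2] at hPsi
      have hcu : u.count c = 0 ∧ r.count c = 0 ∧ q.count c = 0 := by
        simp only [List.nodup_cons, List.mem_append, not_or] at m1 m2
        exact ⟨List.count_eq_zero.2 m1.1.1, List.count_eq_zero.2 m1.1.2,
          List.count_eq_zero.2 m2.1.2⟩
      obtain ⟨w, hw, hwn⟩ := fin _ hPsi (by
        have := List.nodup_iff_count_le_one.1 hs0 c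
        simp [List.count_append, hcu]
        omega)
      have hrev : s0.reverse = r.reverse ++ (q.reverse ++ c :: u.reverse) := by
        rcases List.append_eq_append_iff.1 hw with ⟨e, h1, h2⟩ | ⟨e, h1, h2⟩
        · have he : e = [] := by
            apply nil_of_last_block (X := r.reverse ++ q.reverse) (Y := c :: u.reverse)
              (w := e ++ s0.reverse) (e := e)
            · rw [List.append_assoc, h2, h1, List.append_assoc]
            · simp
            · intro x hx; simp [hx]
            · exact block u r q m1 m2
          subst he
          simp at h1 h2
          rw [← h1, ← h2]
        · have he : e = [] := by
            apply nil_of_nodup_append (w := w) (e := e)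
            · rw [← h1]; exact List.nodup_reverse.2 hs0
            · intro x hx; rw [h2]; simp [hx]
          subst he
          simp at h1 h2
          simp [h1, h2]
      have hs : s0 = u ++ c :: (q ++ r) := by
        have := congrArg List.reverse hrev
        simpa using this
      subst hs
      exact ⟨a, c, u, q, r, rfl, List.nodup_cons.2 ⟨ha0, hs0⟩⟩
    · left
      obtain ⟨u, r, q, rfl, m1, m2⟩ := hnotnd s0 ha0 (Or.inl rfl) hs0 hle2.1
      have hcu : u.count c = 0 ∧ r.count c = 0 ∧ q.count c = 0 := by
        simp only [List.nodup_cons, List.mem_append, not_or] at m1 m2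
        exact ⟨List.count_eq_zero.2 m1.1.1, List.count_eq_zero.2 m1.1.2,
          List.count_eq_zero.2 m2.1.2⟩
      have hvc : v.count c = 1 := by
        simp [List.count_append, hcu] at hcc
        omega
      have hv : v.Nodup := by
        by_contra hnd
        obtain ⟨x, hx2, hx1⟩ := exists_lost _ hnd
        have hxa : x ≠ a := by rintro rfl; rw [List.count_eq_zero.2 hav] at hx2; omega
        have hxc : x ≠ c := by rintro rfl; omega
        have := contra x hxa hxc (by omega)
        have := count_Psi_le x (u ++ c :: (r ++ c :: q))
        omega
      rw [Psi_nodup _ hv, Psi_dup_block _ _ _ _ m1 m2] at hPsi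
      obtain ⟨w, hw, hwn⟩ := fin _ hPsi (by
        simp [List.count_append, hcu, hvc])
      have hrev : v.reverse = r.reverse ++ (q.reverse ++ c :: u.reverse) := by
        rcases List.append_eq_append_iff.1 hw with ⟨e, h1, h2⟩ | ⟨e, h1, h2⟩
        · have he : e = [] := by
            apply nil_of_nodup_append (w := w) (e := e)
            · rw [List.nodup_append_comm, ← h2]; exact List.nodup_reverse.2 hv
            · intro x hx; rw [h1]; simp [hx]
          subst he
          simp at h1 h2
          simp [h1, h2]
        · have he : e = [] := by
            apply nil_of_last_block (X := r.reverse ++ q.reverse) (Y := c :: u.reverse)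
              (w := w) (e := e)
            · rw [List.append_assoc, h1]
            · simp
            · intro x hx; rw [h2]; simp [hx]
            · exact block u r q m1 m2
          subst he
          simp at h1 h2
          rw [h1, ← h2]
      have hs : v = u ++ c :: (q ++ r) := by
        have := congrArg List.reverse hrev
        simpa using this
      subst hs
      refine ⟨a, c, u, r, q, rfl, List.nodup_cons.2 ⟨?_, ?_⟩⟩
      · simp at hav ⊢
        tauto
      · refine (List.Perm.nodup_iff ?_).1 hv
        exact List.Perm.append_left _ (List.Perm.cons _ List.perm_append_comm)

/-- the list of letters in order of first occurrence -/
def fo (p : List ℕ) : List ℕ := p.reverse.dedup.reverse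

theorem fo_snoc_mem (p : List ℕ) (x : ℕ) (h : x ∈ p) : fo (p ++ [x]) = fo p := by
  unfold fo
  rw [List.reverse_append, List.reverse_singleton, List.singleton_append,
    List.dedup_cons_of_mem (by simpa using h)]

theorem fo_snoc_notMem (p : List ℕ) (x : ℕ) (h : x ∉ p) : fo (p ++ [x]) = fo p ++ [x] := by
  unfold fo
  rw [List.reverse_append, List.reverse_singleton, List.singleton_append,
    List.dedup_cons_of_notMem (by simpa using h), List.reverse_cons]

theorem mem_fo (p : List ℕ) (x : ℕ) : x ∈ fo p ↔ x ∈ p := by simp [fo]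

theorem length_fo (p : List ℕ) : (fo p).length = p.toFinset.card := by
  unfold fo
  rw [List.length_reverse, ← List.card_toFinset, List.toFinset_reverse]

theorem fo_append_sub (u v : List ℕ) (h : ∀ x ∈ v, x ∈ u) : fo (u ++ v) = fo u := by
  induction v using List.reverseRecOn with
  | nil => simp
  | append_singleton v x ih =>
    rw [← List.append_assoc, fo_snoc_mem, ih]
    · intro y hy; exact h y (by simp [hy])
    · have := h x (by simp); simp [this]

theorem fo_append_disj (u v : List ℕ) (hv : v.Nodup) (h : ∀ x ∈ v, x ∉ u) :
    fo (u ++ v) = fo u ++ v := by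
  induction v using List.reverseRecOn with
  | nil => simp
  | append_singleton v x ih =>
    have h1 := h x (by simp)
    rw [List.nodup_append] at hv
    have h2 : x ∉ v := fun hx => hv.2.2 x hx x (by simp) rfl
    rw [← List.append_assoc, fo_snoc_notMem, ih hv.1, List.append_assoc]
    · intro y hy; exact h y (by simp [hy])
    · simp [h1, h2]

theorem fo_nodup (v : List ℕ) (hv : v.Nodup) : fo v = v := by
  have := fo_append_disj [] v hv (by simp)
  simpa [fo] using this

theorem canonical_snoc (p : List ℕ) (x : ℕ) :
    CanonicalWord (p ++ [x]) ↔ CanonicalWord p ∧ x ≤ p.toFinset.card := by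
  unfold CanonicalWord
  constructor
  · intro h
    constructor
    · rintro ⟨i, hi⟩
      have := h ⟨i, by simp; omega⟩
      simp only [List.get_eq_getElem] at this ⊢
      rwa [List.getElem_append_left hi, List.take_append_of_le_length (by omega)] at this
    · have := h ⟨p.length, by simp⟩
      simpa using this
  · rintro ⟨h1, h2⟩ ⟨i, hi⟩
    simp only [List.get_eq_getElem]
    by_cases hip : i < p.length
    · have := h1 ⟨i, hip⟩
      rw [List.getElem_append_left hip, List.take_append_of_le_length (by omega)]
      exact this
    · have : i = p.length := by simp at hi; omega
      subst this
      simpa using h2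

theorem canonical_iff (p : List ℕ) : CanonicalWord p ↔ fo p = List.range p.toFinset.card := by
  induction p using List.reverseRecOn with
  | nil => simp [CanonicalWord, fo]
  | append_singleton p x ih =>
    rw [canonical_snoc, ih, ← length_fo, ← length_fo (p ++ [x])]
    by_cases hx : x ∈ p
    · rw [fo_snoc_mem _ _ hx]
      constructor
      · exact fun h => h.1
      · intro h
        refine ⟨h, ?_⟩
        have h2 := (mem_fo p x).2 hx
        rw [h, List.mem_range] at h2
        exact h2.le
    · rw [fo_snoc_notMem _ _ hx, List.length_append, List.length_singleton, List.range_succ]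
      constructor
      · rintro ⟨h1, h2⟩
        have h3 : x ∉ fo p := fun h => hx ((mem_fo p x).1 h)
        rw [h1, List.mem_range] at h3
        have h4 : x = (fo p).length := by omega
        rw [← h1, ← h4]
      · intro h
        have := List.append_inj h (by simp)
        exact ⟨this.1, le_of_eq (List.cons.inj this.2).1⟩

theorem canon_iff (p : List ℕ) (n : ℕ) :
    (CanonicalWord p ∧ Nletters p = n) ↔ fo p = List.range n := by
  rw [canonical_iff]
  unfold Nletters
  constructor
  · rintro ⟨h, rfl⟩; exact h
  · intro h
    have : p.toFinset.card = n := by rw [← length_fo, h, List.length_range]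
    rw [this]
    exact ⟨h, rfl⟩

theorem foA (p l k t : List ℕ) (a : ℕ) (hp : FamA p a l k t) (hn : (a :: (l ++ k ++ t)).Nodup) :
    fo p = a :: (l ++ k ++ t) := by
  have e : p = ((a :: (l ++ k)) ++ (a :: k)) ++ t ++ (a :: (t ++ l)) := by
    rw [hp]; simp
  rw [e, fo_append_sub, fo_append_disj, fo_append_sub, fo_nodup]
  · simp
  · refine List.Nodup.sublist ?_ hn
    simp
  · simp +contextual
  · exact (List.nodup_append.1 (List.nodup_cons.1 hn).2).2.1
  · intro x hx hx2
    rw [List.nodup_cons, List.nodup_append] at hn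
    obtain ⟨h1, h2, h3, h4⟩ := hn
    have h5 : x ≠ a := by rintro rfl; simp [hx] at h1
    have h6 : x ∉ l ++ k := fun h => h4 x h x hx rfl
    simp [h5] at hx2 h6
    tauto
  · simp +contextual
    tauto

theorem foB (p l k t : List ℕ) (a c : ℕ) (hp : FamB p a c l k t)
    (hn : (a :: (l ++ c :: (k ++ t))).Nodup) :
    fo p = a :: (l ++ c :: (k ++ t)) := by
  have e : p = ((a :: (l ++ c :: k)) ++ [c]) ++ t ++ (a :: (l ++ c :: (t ++ k))) := by
    rw [hp]; simp
  have hn' : ((a :: (l ++ c :: k)) ++ t).Nodup := by simpa using hn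
  rw [List.nodup_append] at hn'
  obtain ⟨h2, h3, h4⟩ := hn'
  rw [e, fo_append_sub, fo_append_disj, fo_append_sub, fo_nodup _ h2]
  · simp
  · simp
  · exact h3
  · intro x hx hx2
    refine h4 x ?_ x hx rfl
    simp at hx2 ⊢
    tauto
  · simp
    tauto

theorem foC (p l k t : List ℕ) (a c : ℕ) (hp : FamC p a c l k t)
    (hn : (a :: (l ++ c :: (k ++ t))).Nodup) :
    fo p = a :: (l ++ c :: (k ++ t)) := by
  have e : p = (a :: (l ++ c :: (k ++ t))) ++ (a :: (l ++ c :: (t ++ c :: k))) := by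
    rw [hp]; simp
  rw [e, fo_append_sub, fo_nodup _ hn]
  simp
  tauto

theorem cancel_at {X X' Y Y' : List ℕ} {a : ℕ} (h : a ∉ X) (h' : a ∉ X') :
    X ++ a :: Y = X' ++ a :: Y' ↔ X = X' ∧ a = a ∧ Y = Y' := by
  constructor
  · intro e
    rcases List.append_eq_append_iff.1 e with ⟨r, h1, h2⟩ | ⟨r, h1, h2⟩
    · cases r with
      | nil => simp at h1 h2; simp [h1, h2]
      | cons b r =>
        have : a = b := (List.cons.inj h2).1
        subst this
        rw [h1] at h'
        simp at h'
    · cases r with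
      | nil => simp at h1 h2; simp [h1, h2]
      | cons b r =>
        have : a = b := (List.cons.inj h2).1
        subst this
        rw [h1] at h
        simp at h
  · rintro ⟨rfl, -, rfl⟩; rfl

theorem dup_inj {l k t l' k' t' : List ℕ} {c c' : ℕ}
    (h : (l ++ c :: (k ++ t)).Nodup) (h' : (l' ++ c' :: (k' ++ t')).Nodup)
    (e : l ++ c :: (k ++ c :: t) = l' ++ c' :: (k' ++ c' :: t')) :
    l = l' ∧ c = c' ∧ k = k' ∧ t = t' := by
  have hc : c = c' := by
    by_contra hc
    have h1 : 2 ≤ (l ++ c :: (k ++ c :: t)).count c := by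
      simp [List.count_append]; omega
    have h2 := List.nodup_iff_count_le_one.1 h' c
    rw [e] at h1
    simp [List.count_append, List.count_cons_of_ne (Ne.symm hc)] at h1 h2
    omega
  subst hc
  have h1 : c ∉ l ∧ c ∉ k := by
    have h2 := List.nodup_iff_count_le_one.1 h c
    simp only [List.count_append, List.count_cons_self] at h2
    exact ⟨List.count_eq_zero.1 (by omega), List.count_eq_zero.1 (by omega)⟩
  have h1' : c ∉ l' ∧ c ∉ k' := by
    have h2 := List.nodup_iff_count_le_one.1 h' c
    simp only [List.count_append, List.count_cons_self] at h2
    exact ⟨List.count_eq_zero.1 (by omega), List.count_eq_zero.1 (by omega)⟩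
  obtain ⟨e1, -, e2⟩ := (cancel_at h1.1 h1'.1).1 e
  obtain ⟨e3, -, e4⟩ := (cancel_at h1.2 h1'.2).1 e2
  exact ⟨e1, rfl, e3, e4⟩

theorem injA {p l k t l' k' t' : List ℕ} {a a' : ℕ}
    (hp : FamA p a l k t) (hn : (a :: (l ++ k ++ t)).Nodup)
    (hp' : FamA p a' l' k' t') (hn' : (a' :: (l' ++ k' ++ t')).Nodup) :
    l.length = l'.length ∧ k.length = k'.length := by
  unfold FamA at hp hp'
  rw [hp] at hp'
  have ha : a = a' := (List.cons.inj hp').1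
  subst ha
  have e := (List.cons.inj hp').2
  simp only [List.nodup_cons, List.mem_append, not_or] at hn hn'
  obtain ⟨e1, -, e2⟩ := (cancel_at (by simp [hn]) (by simp [hn'])).1 e
  obtain ⟨e3, -, e4⟩ := (cancel_at (by simp [hn]) (by simp [hn'])).1 e2
  have f1 := congrArg List.length e1
  have f2 := congrArg List.length e3
  have f3 := congrArg List.length e4
  simp only [List.length_append] at f1 f2 f3
  omega

theorem injB {p l k t l' k' t' : List ℕ} {a c a' c' : ℕ}
    (hp : FamB p a c l k t) (hn : (a :: (l ++ c :: (k ++ t))).Nodup)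
    (hp' : FamB p a' c' l' k' t') (hn' : (a' :: (l' ++ c' :: (k' ++ t'))).Nodup) :
    l.length = l'.length ∧ k.length = k'.length := by
  unfold FamB at hp hp'
  rw [hp] at hp'
  have ha : a = a' := (List.cons.inj hp').1
  subst ha
  have e := (List.cons.inj hp').2
  rw [List.nodup_cons] at hn hn'
  obtain ⟨e1, -, e2⟩ := (cancel_at (by have := hn.1; simp at this ⊢; tauto)
    (by have := hn'.1; simp at this ⊢; tauto)).1 e
  obtain ⟨rfl, -, rfl, -⟩ := dup_inj hn.2 hn'.2 e1
  simp

theorem injC {p l k t l' k' t' : List ℕ} {a c a' c' : ℕ}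
    (hp : FamC p a c l k t) (hn : (a :: (l ++ c :: (k ++ t))).Nodup)
    (hp' : FamC p a' c' l' k' t') (hn' : (a' :: (l' ++ c' :: (k' ++ t'))).Nodup) :
    l.length = l'.length ∧ k.length = k'.length := by
  unfold FamC at hp hp'
  rw [hp] at hp'
  have ha : a = a' := (List.cons.inj hp').1
  subst ha
  have e := (List.cons.inj hp').2
  rw [List.nodup_cons] at hn hn'
  obtain ⟨e1, -, e2⟩ := (cancel_at (by have := hn.1; simp at this ⊢; tauto)
    (by have := hn'.1; simp at this ⊢; tauto)).1 e
  have hh : ∀ l k t : List ℕ, ∀ c, (l ++ c :: (k ++ t)).Nodup → (l ++ c :: (t ++ k)).Nodup := by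
    intro l k t c h
    refine (List.Perm.nodup_iff ?_).1 h
    exact List.Perm.append_left _ (List.Perm.cons _ List.perm_append_comm)
  obtain ⟨rfl, -, -, rfl⟩ := dup_inj (hh _ _ _ _ hn.2) (hh _ _ _ _ hn'.2) e2
  simp

theorem countA {p l k t : List ℕ} {a : ℕ} (hp : FamA p a l k t)
    (b : ℕ) : 3 ≤ p.count (p.headD b) := by
  rw [hp]; simp [List.count_append]; omega

theorem countB {p l k t : List ℕ} {a c : ℕ} (hp : FamB p a c l k t)
    (hn : (a :: (l ++ c :: (k ++ t))).Nodup) (b : ℕ) : p.count (p.headD b) = 2 := by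
  simp only [List.nodup_cons, List.mem_append, not_or, List.mem_cons] at hn
  obtain ⟨⟨h1, h2, h3, h4⟩, -⟩ := hn
  rw [hp]
  simp [List.count_append, List.count_cons_of_ne (Ne.symm h2), List.count_eq_zero.2 h1,
    List.count_eq_zero.2 h3, List.count_eq_zero.2 h4]

theorem countC {p l k t : List ℕ} {a c : ℕ} (hp : FamC p a c l k t)
    (hn : (a :: (l ++ c :: (k ++ t))).Nodup) (b : ℕ) : p.count (p.headD b) = 2 := by
  simp only [List.nodup_cons, List.mem_append, not_or, List.mem_cons] at hn
  obtain ⟨⟨h1, h2, h3, h4⟩, -⟩ := hn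
  rw [hp]
  simp [List.count_append, List.count_cons_of_ne (Ne.symm h2), List.count_eq_zero.2 h1,
    List.count_eq_zero.2 h3, List.count_eq_zero.2 h4]

theorem disjBC {p l k t l' k' t' : List ℕ} {a c a' c' : ℕ}
    (hp : FamB p a c l k t) (hn : (a :: (l ++ c :: (k ++ t))).Nodup)
    (hp' : FamC p a' c' l' k' t') (hn' : (a' :: (l' ++ c' :: (k' ++ t'))).Nodup) : False := by
  unfold FamB at hp
  unfold FamC at hp'
  rw [hp] at hp'
  have ha : a = a' := (List.cons.inj hp').1
  subst ha
  have e := (List.cons.inj hp').2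
  rw [List.nodup_cons] at hn hn'
  obtain ⟨e1, -, e2⟩ := (cancel_at (by have := hn.1; simp at this ⊢; tauto)
    (by have := hn'.1; simp at this ⊢; tauto)).1 e
  have h1 : 2 ≤ (l ++ c :: (k ++ c :: t)).count c := by
    simp [List.count_append]; omega
  have h2 := List.nodup_iff_count_le_one.1 hn'.2 c
  rw [e1] at h1
  omega

/-- parameters: `⟨s, x⟩` with `x ≤ s ≤ m` -/
def params (m : ℕ) : Finset ((_ : ℕ) × ℕ) :=
  (Finset.range (m + 1)).sigma (fun s => Finset.range (s + 1))

theorem card_params (m : ℕ) : (params m).card = Nat.choose (m + 2) 2 := by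
  unfold params
  rw [Finset.card_sigma]
  induction m with
  | zero => simp
  | succ m ih =>
    rw [Finset.sum_range_succ, ih, Finset.card_range,
      Nat.choose_succ_succ' (m + 2) 1, Nat.choose_one_right, show 1 + 1 = 2 from rfl]
    omega

theorem mem_params (m : ℕ) (q : (_ : ℕ) × ℕ) : q ∈ params m ↔ q.2 ≤ q.1 ∧ q.1 ≤ m := by
  simp [params]
  omega

def wordA (a : ℕ) (l k t : List ℕ) : List ℕ := a :: (l ++ k ++ a :: (k ++ t ++ a :: (t ++ l)))
def wordB (a c : ℕ) (l k t : List ℕ) : List ℕ :=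
  a :: (l ++ c :: (k ++ c :: t) ++ a :: (l ++ c :: (t ++ k)))
def wordC (a c : ℕ) (l k t : List ℕ) : List ℕ :=
  a :: (l ++ c :: (k ++ t) ++ a :: (l ++ c :: (t ++ c :: k)))

def mapA (m : ℕ) (q : (_ : ℕ) × ℕ) : List ℕ :=
  wordA 0 (List.range' 1 q.2) (List.range' (1 + q.2) (q.1 - q.2)) (List.range' (1 + q.1) (m - q.1))
def mapB (m : ℕ) (q : (_ : ℕ) × ℕ) : List ℕ :=
  wordB 0 (1 + q.2) (List.range' 1 q.2) (List.range' (2 + q.2) (q.1 - q.2))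
    (List.range' (2 + q.1) (m - q.1))
def mapC (m : ℕ) (q : (_ : ℕ) × ℕ) : List ℕ :=
  wordC 0 (1 + q.2) (List.range' 1 q.2) (List.range' (2 + q.2) (q.1 - q.2))
    (List.range' (2 + q.1) (m - q.1))

theorem catA (m s x : ℕ) (h1 : x ≤ s) (h2 : s ≤ m) :
    0 :: (List.range' 1 x ++ List.range' (1 + x) (s - x) ++ List.range' (1 + s) (m - s)) =
      List.range (m + 1) := by
  have e1 : List.range' 1 x ++ List.range' (1 + x) (s - x) = List.range' 1 s := by
    rw [List.range'_append_1]; congr 1; omega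
  have e2 : List.range' 1 s ++ List.range' (1 + s) (m - s) = List.range' 1 m := by
    rw [List.range'_append_1]; congr 1; omega
  rw [e1, e2, List.range_eq_range', List.range'_succ]

theorem catB (m s x : ℕ) (h1 : x ≤ s) (h2 : s ≤ m) :
    0 :: (List.range' 1 x ++ (1 + x) :: (List.range' (2 + x) (s - x) ++
      List.range' (2 + s) (m - s))) = List.range (m + 2) := by
  have e1 : List.range' (2 + x) (s - x) ++ List.range' (2 + s) (m - s) =
      List.range' (2 + x) (m - x) := by
    rw [show 2 + s = 2 + x + (s - x) by omega, List.range'_append_1]; congr 1; omega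
  have e2 : (1 + x) :: List.range' (2 + x) (m - x) = List.range' (1 + x) (m - x + 1) := by
    rw [List.range'_succ]; congr 2; omega
  rw [e1, e2, List.range'_append_1, List.range_eq_range', List.range'_succ (n := m + 1)]
  congr 2; omega

theorem splitA (m a : ℕ) (l k t : List ℕ) (h : a :: (l ++ k ++ t) = List.range (m + 1)) :
    ∃ q ∈ params m, mapA m q = wordA a l k t := by
  rw [List.range_eq_range', eq_comm, List.range'_eq_cons_iff] at h
  obtain ⟨rfl, -, h⟩ := h
  rw [eq_comm, List.range'_eq_append_iff] at h
  obtain ⟨s, hs, h1, rfl⟩ := h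
  rw [eq_comm, List.range'_eq_append_iff] at h1
  obtain ⟨x, hx, rfl, rfl⟩ := h1
  refine ⟨⟨s, x⟩, ?_, ?_⟩
  · rw [mem_params]; simp only; omega
  · simp [mapA]

theorem splitB (m a c : ℕ) (l k t : List ℕ)
    (h : a :: (l ++ c :: (k ++ t)) = List.range (m + 2)) :
    ∃ q ∈ params m, mapB m q = wordB a c l k t ∧ mapC m q = wordC a c l k t := by
  rw [List.range_eq_range', eq_comm, List.range'_eq_cons_iff] at h
  obtain ⟨rfl, -, h⟩ := h
  rw [eq_comm, List.range'_eq_append_iff] at h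
  obtain ⟨x, hs, rfl, h1⟩ := h
  rw [eq_comm, List.range'_eq_cons_iff] at h1
  obtain ⟨rfl, h0, h1⟩ := h1
  rw [eq_comm, List.range'_eq_append_iff] at h1
  obtain ⟨y, hx, rfl, rfl⟩ := h1
  refine ⟨⟨x + y, x⟩, ?_, ?_⟩
  · rw [mem_params]; simp only; omega
  · have e1 : 0 + 1 + x * 1 + 1 = 2 + x := by omega
    have e2 : 2 + x + y * 1 = 2 + (x + y) := by omega
    have e3 : m + 2 - 1 - x - 1 - y = m - (x + y) := by omega
    simp only [mapB, mapC]
    rw [e1, e2, e3]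
    simp

theorem pull_q {q q' : (_ : ℕ) × ℕ} {m : ℕ} (hq : q ∈ params m) (hq' : q' ∈ params m)
    (h1 : q.2 = q'.2) (h2 : q.1 - q.2 = q'.1 - q'.2) : q = q' := by
  rw [mem_params] at hq hq'
  obtain ⟨s, x⟩ := q
  obtain ⟨s', x'⟩ := q'
  simp only at *
  obtain rfl : x = x' := h1
  obtain rfl : s = s' := by omega
  rfl

/-- For n ≥ 3, the number of inequivalent set partition words p with N(p) = n and
|p| = 2n+1 that are not sorted after n-1 applications of φ_{aba} is
C(n+1,2) + 2·C(n,2). -/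
theorem stmt9 (n : ℕ) (hn : 3 ≤ n) :
    Nat.card {p : List ℕ // CanonicalWord p ∧ Nletters p = n ∧ p.length = 2 * n + 1 ∧
      ¬ SortedWord (phi^[n - 1] p)} = Nat.choose (n + 1) 2 + 2 * Nat.choose n 2 := by
  obtain ⟨m, rfl⟩ : ∃ m, n = m + 2 := ⟨n - 2, by omega⟩
  have cA : ∀ q ∈ params (m + 1), 0 :: (List.range' 1 q.2 ++ List.range' (1 + q.2) (q.1 - q.2) ++
      List.range' (1 + q.1) (m + 1 - q.1)) = List.range (m + 2) := by
    intro q hq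
    rw [mem_params] at hq
    exact catA _ _ _ hq.1 hq.2
  have cB : ∀ q ∈ params m, 0 :: (List.range' 1 q.2 ++ (1 + q.2) ::
      (List.range' (2 + q.2) (q.1 - q.2) ++ List.range' (2 + q.1) (m - q.1))) =
      List.range (m + 2) := by
    intro q hq
    rw [mem_params] at hq
    exact catB _ _ _ hq.1 hq.2
  have nA : ∀ q ∈ params (m + 1), (0 :: (List.range' 1 q.2 ++
      List.range' (1 + q.2) (q.1 - q.2) ++ List.range' (1 + q.1) (m + 1 - q.1))).Nodup := by
    intro q hq
    rw [cA q hq]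
    exact List.nodup_range
  have nB : ∀ q ∈ params m, (0 :: (List.range' 1 q.2 ++ (1 + q.2) ::
      (List.range' (2 + q.2) (q.1 - q.2) ++ List.range' (2 + q.1) (m - q.1)))).Nodup := by
    intro q hq
    rw [cB q hq]
    exact List.nodup_range
  have iA : Set.InjOn (mapA (m + 1)) (params (m + 1)) := by
    intro q hq q' hq' h
    have := injA (p := mapA (m + 1) q) rfl (nA q hq) h (nA q' hq')
    simp only [List.length_range'] at this
    exact pull_q hq hq' this.1 this.2
  have iB : Set.InjOn (mapB m) (params m) := by
    intro q hq q' hq' h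
    have := injB (p := mapB m q) rfl (nB q hq) h (nB q' hq')
    simp only [List.length_range'] at this
    exact pull_q hq hq' this.1 this.2
  have iC : Set.InjOn (mapC m) (params m) := by
    intro q hq q' hq' h
    have := injC (p := mapC m q) rfl (nB q hq) h (nB q' hq')
    simp only [List.length_range'] at this
    exact pull_q hq hq' this.1 this.2
  have dBC : Disjoint ((params m).image (mapB m)) ((params m).image (mapC m)) := by
    rw [Finset.disjoint_left]
    intro p h1 h2
    obtain ⟨q, hq, rfl⟩ := Finset.mem_image.1 h1
    obtain ⟨q', hq', h⟩ := Finset.mem_image.1 h2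
    exact disjBC (p := mapB m q) rfl (nB q hq) h.symm (nB q' hq')
  have dA : Disjoint ((params (m + 1)).image (mapA (m + 1)))
      ((params m).image (mapB m) ∪ (params m).image (mapC m)) := by
    rw [Finset.disjoint_left]
    intro p h1 h2
    obtain ⟨q, hq, rfl⟩ := Finset.mem_image.1 h1
    have h3 := countA (p := mapA (m + 1) q) rfl 0
    rcases Finset.mem_union.1 h2 with h2 | h2
    · obtain ⟨q', hq', h⟩ := Finset.mem_image.1 h2
      have := countB h.symm (nB q' hq') 0
      omega
    · obtain ⟨q', hq', h⟩ := Finset.mem_image.1 h2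
      have := countC h.symm (nB q' hq') 0
      omega
  rw [Nat.subtype_card ((params (m + 1)).image (mapA (m + 1)) ∪
    ((params m).image (mapB m) ∪ (params m).image (mapC m)))]
  · rw [Finset.card_union_of_disjoint dA, Finset.card_union_of_disjoint dBC,
      Finset.card_image_of_injOn iA, Finset.card_image_of_injOn iB, Finset.card_image_of_injOn iC,
      card_params, card_params]
    ring
  · intro p
    rw [bad_iff, ← and_assoc, canon_iff]
    simp only [Finset.mem_union, Finset.mem_image]
    constructor
    · rintro (⟨q, hq, rfl⟩ | ⟨q, hq, rfl⟩ | ⟨q, hq, rfl⟩)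
      · have e := congrArg List.length (cA q hq)
        refine ⟨(foA _ _ _ _ _ rfl (nA q hq)).trans (cA q hq), ?_,
          suffA _ _ _ _ 0 (m + 2) hn rfl (nA q hq) ?_⟩
        · simp [mapA, wordA] at e ⊢; omega
        · simp at e ⊢; omega
      · have e := congrArg List.length (cB q hq)
        refine ⟨(foB _ _ _ _ _ _ rfl (nB q hq)).trans (cB q hq), ?_,
          suffB _ _ _ _ 0 _ (m + 2) hn rfl (nB q hq) ?_⟩
        · simp [mapB, wordB] at e ⊢; omega
        · simp at e ⊢; omega
      · have e := congrArg List.length (cB q hq)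
        refine ⟨(foC _ _ _ _ _ _ rfl (nB q hq)).trans (cB q hq), ?_,
          suffC _ _ _ _ 0 _ (m + 2) hn rfl (nB q hq) ?_⟩
        · simp [mapC, wordC] at e ⊢; omega
        · simp at e ⊢; omega
    · rintro ⟨hfo, hlen, hbad⟩
      have hN : p.toFinset.card = m + 2 := by rw [← length_fo, hfo, List.length_range]
      rcases main_nec p (m + 2) hn hN hlen hbad with
        ⟨a, l, k, t, hp, hnd⟩ | ⟨a, c, l, k, t, hp, hnd⟩ | ⟨a, c, l, k, t, hp, hnd⟩
      · left
        rw [foA _ _ _ _ _ hp hnd] at hfo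
        obtain ⟨q, hq, h⟩ := splitA (m + 1) a l k t hfo
        exact ⟨q, hq, h.trans hp.symm⟩
      · right; left
        rw [foB _ _ _ _ _ _ hp hnd] at hfo
        obtain ⟨q, hq, h, -⟩ := splitB m a c l k t hfo
        exact ⟨q, hq, h.trans hp.symm⟩
      · right; right
        rw [foC _ _ _ _ _ _ hp hnd] at hfo
        obtain ⟨q, hq, -, h⟩ := splitB m a c l k t hfo
        exact ⟨q, hq, h.trans hp.symm⟩
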